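/- Almost all cographs have a generalized cospectral mate. Precisely, letting c(n) denote the number of isomorphism classes of cographs on n vertices and g(n) denote the number of isomorphism classes of cographs on n vertices G for which there exists a graph H on n vertices that is generalized cospectral with G but not isomorphic to G, one has lim_{n→∞} g(n)/c(n) = 1. -/

import Mathlib

open SimpleGraph

/-- The characteristic polynomial (over `ℝ`) of the adjacency matrix of a finite graph. -/
noncomputable def adjCharPoly {V : Type} [Fintype V] [DecidableEq V] (G : SimpleGraph V) :
    Polynomial ℝ :=
  letI := Classical.decRel G.Adj
  Matrix.charpoly (G.adjMatrix ℝ)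

/-- Two finite graphs are cospectral if their adjacency matrices have the same
characteristic polynomial. -/
def Cospectral {V W : Type} [Fintype V] [DecidableEq V] [Fintype W] [DecidableEq W]
    (G : SimpleGraph V) (H : SimpleGraph W) : Prop :=
  adjCharPoly G = adjCharPoly H

/-- Generalized cospectrality: the graphs are cospectral and so are their complements. -/
def GenCospectral {V W : Type} [Fintype V] [DecidableEq V] [Fintype W] [DecidableEq W]
    (G : SimpleGraph V) (H : SimpleGraph W) : Prop :=
  Cospectral G H ∧ Cospectral Gᶜ Hᶜ

/-- A cograph is a graph with no induced path `P₄` (on 4 vertices). -/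
def IsCograph {V : Type} (G : SimpleGraph V) : Prop :=
  ¬ ∃ f : Fin 4 ↪ V, ∀ i j, G.Adj (f i) (f j) ↔ (SimpleGraph.pathGraph 4).Adj i j

/-- The number of isomorphism classes of graphs on `n` vertices satisfying an
isomorphism-invariant property `P`. -/
noncomputable def classCount (n : ℕ) (P : SimpleGraph (Fin n) → Prop) : ℕ :=
  Nat.card (Quot fun G H : {G : SimpleGraph (Fin n) // P G} => Nonempty (G.1 ≃g H.1))

/-!
A graph containing `switchGraph` or its complement as a module has a generalized cospectral mate:
replace the module by a graph similar to it through an orthogonal matrix fixing the all-ones vector,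
and extend that matrix by the identity. Since the replacement is not a cograph, neither is the mate.

It remains to see that cographs without such a module are rare. Let `t n` and `b n` count the
connected cographs and the connected cographs without such a module on `n` vertices. For `n ≥ 2`
complementation exchanges connected and disconnected cographs, so all cographs are counted by
`2 * t n`, and likewise for `2 * b n`. A graph is the multiset of its components, so the Euler
transform of `t` is `2 * t n`, whereas that of `b` is at least `2 * b n`, with strict inequality at
`n = 9` because `switchGraph` is disconnected with components too small to contain it. At the radius
of convergence `ρ < 1` of `∑ t n xⁿ` the Euler product identity leaves room for this extra term, so
`∑ b n xⁿ` converges at some `R > ρ`. Disjoint unions of two connected cographs show that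
`t m * t n ≤ 2 * t (m + n)` for `m < n`, which keeps `t n * Qⁿ` away from zero for every `Q` between
`ρ` and `R`; hence `b n / t n` decays exponentially.
-/

/-! ### Regular orthogonal similarity -/

section Similarity

variable {V W : Type} [Fintype V] [DecidableEq V] [Fintype W] [DecidableEq W]

lemma adjCharPoly_eq_charpoly (G : SimpleGraph V) [DecidableRel G.Adj] :
    adjCharPoly G = (G.adjMatrix ℝ).charpoly := by
  unfold adjCharPoly
  congr!

lemma Cospectral.of_iso {G : SimpleGraph V} {H : SimpleGraph W} (e : G ≃g H) : Cospectral G H := by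
  classical
  rw [Cospectral, adjCharPoly_eq_charpoly, adjCharPoly_eq_charpoly, ← e.reindex_adjMatrix ℝ,
    Matrix.charpoly_reindex]

/-- An isomorphism as an isomorphism of the complements. -/
def complIso {V W : Type} {G : SimpleGraph V} {H : SimpleGraph W} (e : G ≃g H) : Gᶜ ≃g Hᶜ :=
  ⟨e.toEquiv, by simp [e.map_adj_iff]⟩

lemma GenCospectral.of_iso {G : SimpleGraph V} {H : SimpleGraph W} (e : G ≃g H) :
    GenCospectral G H :=
  ⟨.of_iso e, .of_iso (complIso e)⟩

lemma GenCospectral.trans {U : Type} [Fintype U] [DecidableEq U] {F : SimpleGraph U}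
    {G : SimpleGraph V} {H : SimpleGraph W} (h₁ : GenCospectral F G) (h₂ : GenCospectral G H) :
    GenCospectral F H :=
  ⟨h₁.1.trans h₂.1, h₁.2.trans h₂.2⟩

/-- `G` and `H` are similar through an orthogonal matrix fixing the all-ones vector. By a theorem
of Johnson and Newman this is equivalent to generalized cospectrality on a common vertex set, but
unlike the latter it visibly passes to larger graphs. -/
def RegularOrthogonalSimilar (G H : SimpleGraph V) [DecidableRel G.Adj] [DecidableRel H.Adj] :
    Prop :=
  ∃ Q ∈ Matrix.orthogonalGroup V ℝ, Q.mulVec 1 = 1 ∧ G.adjMatrix ℝ * Q = Q * H.adjMatrix ℝ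

lemma vecMul_one_of_mem_orthogonalGroup {Q : Matrix V V ℝ} (hQ : Q ∈ Matrix.orthogonalGroup V ℝ)
    (h : Q.mulVec 1 = 1) : Matrix.vecMul 1 Q = 1 := by
  rw [← Matrix.mulVec_transpose, ← h, Matrix.mulVec_mulVec,
    (Matrix.mem_orthogonalGroup_iff' V ℝ).1 hQ, Matrix.one_mulVec, h]

lemma RegularOrthogonalSimilar.compl {G H : SimpleGraph V} [DecidableRel G.Adj]
    [DecidableRel H.Adj] (h : RegularOrthogonalSimilar G H) : RegularOrthogonalSimilar Gᶜ Hᶜ := by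
  obtain ⟨Q, hQ, hQ1, hGH⟩ := h
  have hadj (F : SimpleGraph V) [DecidableRel F.Adj] :
      Fᶜ.adjMatrix ℝ = Matrix.vecMulVec 1 1 - 1 - F.adjMatrix ℝ := by
    ext i j
    by_cases hij : i = j <;> by_cases hF : F.Adj i j <;> simp_all
  refine ⟨Q, hQ, hQ1, ?_⟩
  rw [hadj, hadj, sub_mul, sub_mul, mul_sub, mul_sub, hGH, Matrix.vecMulVec_mul,
    Matrix.mul_vecMulVec, vecMul_one_of_mem_orthogonalGroup hQ hQ1, hQ1, one_mul, mul_one]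

lemma RegularOrthogonalSimilar.cospectral {G H : SimpleGraph V} [DecidableRel G.Adj]
    [DecidableRel H.Adj] (h : RegularOrthogonalSimilar G H) : Cospectral G H := by
  obtain ⟨Q, hQ, -, hGH⟩ := h
  let U : (Matrix V V ℝ)ˣ := ⟨Q, Q.transpose, (Matrix.mem_orthogonalGroup_iff V ℝ).1 hQ,
    (Matrix.mem_orthogonalGroup_iff' V ℝ).1 hQ⟩
  rw [Cospectral, adjCharPoly_eq_charpoly, adjCharPoly_eq_charpoly,
    ← Matrix.charpoly_units_conj U (H.adjMatrix ℝ), ← hGH]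
  rw [Matrix.mul_nonsing_inv_cancel_right _ _ ((Matrix.isUnit_iff_isUnit_det _).1 U.isUnit)]

lemma RegularOrthogonalSimilar.genCospectral {G H : SimpleGraph V} [DecidableRel G.Adj]
    [DecidableRel H.Adj] (h : RegularOrthogonalSimilar G H) : GenCospectral G H :=
  ⟨h.cospectral, h.compl.cospectral⟩

end Similarity

section Modules

variable {K R V W : Type}

/-- The graph on `K ⊕ R` with `A` on `K` and `D` on `R` in which every vertex of `K` is adjacent to
exactly the vertices of `S ⊆ R`: the general shape of a graph containing `A` as a module. -/
def moduleSum (A : SimpleGraph K) (D : SimpleGraph R) (S : Set R) : SimpleGraph (K ⊕ R) where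
  Adj
    | .inl i, .inl j => A.Adj i j
    | .inl _, .inr r => r ∈ S
    | .inr r, .inl _ => r ∈ S
    | .inr r, .inr s => D.Adj r s
  symm := ⟨by rintro (i | r) (j | s) h <;> first | exact h | exact h.symm⟩
  loopless := ⟨by rintro (i | r) <;> exact SimpleGraph.irrefl _⟩

lemma adjMatrix_moduleSum (A : SimpleGraph K) (D : SimpleGraph R) (S : Set R) [DecidableRel A.Adj]
    [DecidableRel D.Adj] [DecidableRel (moduleSum A D S).Adj] :
    (moduleSum A D S).adjMatrix ℝ = Matrix.fromBlocks (A.adjMatrix ℝ)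
      (Matrix.vecMulVec 1 (S.indicator 1)) (Matrix.vecMulVec (S.indicator 1) 1)
      (D.adjMatrix ℝ) := by
  classical
  ext (i | r) (j | s) <;>
    simp [adjMatrix_apply, moduleSum.eq_def, Set.indicator_apply]

lemma RegularOrthogonalSimilar.moduleSum_moduleSum [Fintype K] [DecidableEq K] [Fintype R]
    [DecidableEq R] {A B : SimpleGraph K} [DecidableRel A.Adj] [DecidableRel B.Adj]
    (h : RegularOrthogonalSimilar A B) (D : SimpleGraph R) (S : Set R)
    [DecidableRel (moduleSum A D S).Adj] [DecidableRel (moduleSum B D S).Adj] :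
    RegularOrthogonalSimilar (moduleSum A D S) (moduleSum B D S) := by
  classical
  obtain ⟨Q, hQ, hQ1, hAB⟩ := h
  refine ⟨Matrix.fromBlocks Q 0 0 1, ?_, ?_, ?_⟩
  · rw [Matrix.mem_orthogonalGroup_iff] at hQ ⊢
    simp [Matrix.fromBlocks_transpose, Matrix.fromBlocks_multiply, hQ]
  · ext (i | r)
    · simpa [Matrix.mulVec, dotProduct] using congrFun hQ1 i
    · simp [Matrix.mulVec, dotProduct, Matrix.one_apply]
  · simp only [adjMatrix_moduleSum, Matrix.fromBlocks_multiply, Matrix.mul_vecMulVec,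
      Matrix.vecMulVec_mul, hAB, hQ1, vecMul_one_of_mem_orthogonalGroup hQ hQ1, Matrix.mul_zero,
      Matrix.zero_mul, Matrix.mul_one, Matrix.one_mul, Matrix.zero_mulVec, Matrix.one_mulVec,
      Matrix.zero_vecMulVec, add_zero, zero_add]

/-- `G` contains an induced copy of `A` none of whose vertices is distinguished from the others by
an outside vertex. -/
def HasModule (A : SimpleGraph K) (G : SimpleGraph V) : Prop :=
  ∃ f : A ↪g G, ∀ v ∉ Set.range f, ∀ i j, G.Adj (f i) v ↔ G.Adj (f j) v

lemma HasModule.self (A : SimpleGraph K) : HasModule A A :=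
  ⟨Embedding.refl, fun v hv => (hv ⟨v, rfl⟩).elim⟩

lemma HasModule.iso {A : SimpleGraph K} {G : SimpleGraph V} {H : SimpleGraph W}
    (h : HasModule A G) (e : G ≃g H) : HasModule A H := by
  obtain ⟨f, hf⟩ := h
  refine ⟨e.toEmbedding.comp f, fun v hv i j => ?_⟩
  obtain ⟨v, rfl⟩ := e.surjective v
  have hv' : v ∉ Set.range f := by
    rintro ⟨i, rfl⟩
    exact hv ⟨i, rfl⟩
  exact e.map_adj_iff.trans ((hf v hv' i j).trans e.map_adj_iff.symm)

lemma HasModule.compl {A : SimpleGraph K} {G : SimpleGraph V} (h : HasModule A G) :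
    HasModule Aᶜ Gᶜ := by
  obtain ⟨f, hf⟩ := h
  refine ⟨Embedding.complEquiv f, fun v hv i j => ?_⟩
  have hne (i : K) : f i ≠ v := fun h => hv ⟨i, h⟩
  change Gᶜ.Adj (f i) v ↔ Gᶜ.Adj (f j) v
  rw [compl_adj, compl_adj, hf v hv i j, and_iff_right (hne i), and_iff_right (hne j)]

lemma HasModule.exists_moduleSum_iso {A : SimpleGraph K} {G : SimpleGraph V}
    (h : HasModule A G) : ∃ (R : Set V) (D : SimpleGraph R) (S : Set R),
      Nonempty (moduleSum A D S ≃g G) := by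
  classical
  obtain ⟨f, hf⟩ := h
  let e : K ⊕ ↥(Set.range f)ᶜ ≃ V :=
    ((Equiv.ofInjective f f.injective).sumCongr (Equiv.refl _)).trans (Equiv.Set.sumCompl _)
  have hinl (i : K) (r : ↥(Set.range f)ᶜ) : G.Adj (f i) r ↔ ∃ j, G.Adj (f j) r :=
    ⟨fun h => ⟨i, h⟩, fun ⟨j, h⟩ => (hf r r.2 i j).2 h⟩
  refine ⟨(Set.range f)ᶜ, G.induce _, {r | ∃ j, G.Adj (f j) r}, ⟨⟨e, ?_⟩⟩⟩
  rintro (i | r) (j | s)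
  · exact f.map_adj_iff
  · exact hinl i s
  · exact (G.adj_comm _ _).trans (hinl j r)
  · exact Iff.rfl

end Modules

lemma isCograph_iff {V : Type} {G : SimpleGraph V} :
    IsCograph G ↔ ¬ (pathGraph 4).IsIndContained G :=
  not_congr ⟨fun ⟨f, hf⟩ => ⟨⟨f, hf _ _⟩⟩, fun ⟨f⟩ => ⟨f.toEmbedding, fun _ _ => f.map_adj_iff⟩⟩

lemma IsCograph.of_isIndContained {V W : Type} {G : SimpleGraph V} {H : SimpleGraph W}
    (hH : IsCograph H) (h : G.IsIndContained H) : IsCograph G :=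
  isCograph_iff.2 fun hG => isCograph_iff.1 hH (hG.trans h)

lemma nonempty_pathGraph_four_iso_compl : Nonempty (pathGraph 4 ≃g (pathGraph 4)ᶜ) := by
  refine ⟨⟨⟨![1, 3, 0, 2], ![2, 0, 3, 1], by decide, by decide⟩, ?_⟩⟩
  simp only [compl_adj, pathGraph_adj]
  decide

lemma IsCograph.compl {V : Type} {G : SimpleGraph V} (hG : IsCograph G) : IsCograph Gᶜ := by
  obtain ⟨e⟩ := nonempty_pathGraph_four_iso_compl
  rw [isCograph_iff] at hG ⊢
  exact fun ⟨f⟩ => hG (compl_isIndContained_compl.1 ⟨f.comp e.symm.toEmbedding⟩)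

theorem HasModule.exists_genCospectral_not_iso {K V : Type} [Fintype K] [DecidableEq K] [Fintype V]
    [DecidableEq V] {A B : SimpleGraph K} [DecidableRel A.Adj] [DecidableRel B.Adj]
    {G : SimpleGraph V} (hG : IsCograph G) (h : HasModule A G) (hAB : RegularOrthogonalSimilar A B)
    (hB : ¬ IsCograph B) : ∃ H : SimpleGraph V, GenCospectral G H ∧ ¬ Nonempty (G ≃g H) := by
  classical
  obtain ⟨R, D, S, ⟨e⟩⟩ := h.exists_moduleSum_iso
  let e' : moduleSum B D S ≃g (moduleSum B D S).map e.toEquiv.toEmbedding := Iso.map _ _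
  refine ⟨_, (GenCospectral.of_iso e.symm).trans
    ((hAB.moduleSum_moduleSum D S).genCospectral.trans (.of_iso e')), fun ⟨i⟩ => hB ?_⟩
  let inl : B ↪g moduleSum B D S := ⟨Function.Embedding.inl, Iff.rfl⟩
  exact hG.of_isIndContained ⟨((i.symm.toEmbedding).comp e'.toEmbedding).comp inl⟩

/-! ### A concrete pair -/

/-- The disjoint union of a triangle and a cograph on six vertices. With its complement it is the
module that is switched. -/
def switchGraph : SimpleGraph (Fin 9) :=
  fromEdgeSet (({s(0, 1), s(0, 2), s(1, 2), s(3, 7), s(4, 7), s(5, 7), s(3, 8), s(4, 8), s(5, 8),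
    s(6, 8), s(7, 8)} : Finset (Sym2 (Fin 9))) : Set (Sym2 (Fin 9)))

/-- The graph replacing `switchGraph`; the path `8, 6, 7, 3` is induced. -/
def switchedGraph : SimpleGraph (Fin 9) :=
  fromEdgeSet (({s(0, 1), s(0, 2), s(1, 2), s(0, 8), s(1, 8), s(2, 8), s(6, 8), s(6, 7), s(3, 7),
    s(4, 7), s(5, 7)} : Finset (Sym2 (Fin 9))) : Set (Sym2 (Fin 9)))

instance : DecidableRel switchGraph.Adj := by unfold switchGraph; infer_instance

instance : DecidableRel switchedGraph.Adj := by unfold switchedGraph; infer_instance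

/-- Fifteen times a regular orthogonal matrix taking `switchedGraph` to `switchGraph`. With `A` the
adjacency matrix of `switchGraph` and `B` that of `switchedGraph`, it is the map between the walk
spaces `ℝ[B] 1` and `ℝ[A] 1` taking `Bᵏ 1` to `Aᵏ 1`, extended by the identity on the vectors with
coordinate sum zero supported on `{0, 1, 2}` or on `{3, 4, 5}`. -/
def switchMatrix : Matrix (Fin 9) (Fin 9) ℤ :=
  !![ 9, -6, -6,  3,  3,  3,  3,  6,  0;
     -6,  9, -6,  3,  3,  3,  3,  6,  0;
     -6, -6,  9,  3,  3,  3,  3,  6,  0;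
      3,  3,  3, 11, -4, -4,  6, -3,  0;
      3,  3,  3, -4, 11, -4,  6, -3,  0;
      3,  3,  3, -4, -4, 11,  6, -3,  0;
      3,  3,  3,  6,  6,  6, -9, -3,  0;
      0,  0,  0,  0,  0,  0,  0,  0, 15;
      6,  6,  6, -3, -3, -3, -3,  9,  0]

lemma map_adjMatrix_intCast {V : Type} (G : SimpleGraph V) [DecidableRel G.Adj] :
    (G.adjMatrix ℤ).map (Int.castRingHom ℝ) = G.adjMatrix ℝ := by
  ext i j
  simp [adjMatrix_apply]

lemma regularOrthogonalSimilar_switchGraph :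
    RegularOrthogonalSimilar switchGraph switchedGraph := by
  let Q : Matrix (Fin 9) (Fin 9) ℝ := switchMatrix.map (Int.castRingHom ℝ)
  have horth : Q * Q.transpose = (225 : ℝ) • 1 := by
    have h : switchMatrix * switchMatrix.transpose = Matrix.diagonal 225 := by decide +kernel
    rw [← Matrix.transpose_map, ← Matrix.map_mul, h, Matrix.diagonal_map (map_zero _),
      Matrix.smul_one_eq_diagonal]
    congr!
  have hone : Q.mulVec 1 = (15 : ℝ) • 1 := by
    have h : switchMatrix.mulVec 1 = 15 := by decide +kernel
    ext i
    have hmap := RingHom.map_mulVec (Int.castRingHom ℝ) switchMatrix 1 i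
    rw [h] at hmap
    simpa [Q, Function.comp_def, Pi.one_def] using hmap.symm
  have hcomm : switchGraph.adjMatrix ℝ * Q = Q * switchedGraph.adjMatrix ℝ := by
    have h : switchGraph.adjMatrix ℤ * switchMatrix = switchMatrix * switchedGraph.adjMatrix ℤ := by
      decide +kernel
    simpa only [Matrix.map_mul, map_adjMatrix_intCast] using congrArg (·.map (Int.castRingHom ℝ)) h
  refine ⟨(15 : ℝ)⁻¹ • Q, ?_, ?_, ?_⟩
  · rw [Matrix.mem_orthogonalGroup_iff, Matrix.transpose_smul, Matrix.smul_mul, Matrix.mul_smul,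
      horth, smul_smul, smul_smul]
    norm_num
  · rw [Matrix.smul_mulVec, hone, inv_smul_smul₀ (by norm_num)]
  · rw [Matrix.mul_smul, Matrix.smul_mul, hcomm]

lemma not_isCograph_switchedGraph : ¬ IsCograph switchedGraph := by
  refine fun h => h ⟨⟨![8, 6, 7, 3], by decide⟩, ?_⟩
  simp only [pathGraph_adj]
  decide +kernel

lemma not_connected_switchGraph : ¬ switchGraph.Connected := by
  have hclosed : ∀ i j, switchGraph.Adj i j → i ∈ ({0, 1, 2} : Set (Fin 9)) →
      j ∈ ({0, 1, 2} : Set (Fin 9)) := by decide +kernel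
  intro h
  obtain ⟨p⟩ := h.preconnected 0 3
  obtain ⟨d, -, hfst, hsnd⟩ := p.exists_boundary_dart {0, 1, 2} (by simp) (by simp)
  exact hsnd (hclosed _ _ d.adj hfst)

lemma isCograph_switchGraph : IsCograph switchGraph := by
  have hpath : ∀ a b, switchGraph.Adj a b → ∀ c, switchGraph.Adj b c → ¬ switchGraph.Adj a c →
      ∀ d, switchGraph.Adj c d → switchGraph.Adj a d ∨ switchGraph.Adj b d := by decide +kernel
  rintro ⟨f, hf⟩
  have h := hpath (f 0) (f 1) (by simp [hf, pathGraph_adj]) (f 2) (by simp [hf, pathGraph_adj])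
    (by simp [hf, pathGraph_adj]) (f 3) (by simp [hf, pathGraph_adj])
  simp [hf, pathGraph_adj] at h

theorem exists_genCospectral_not_iso_of_hasModule {V : Type} [Fintype V] [DecidableEq V]
    {G : SimpleGraph V} (hG : IsCograph G)
    (h : HasModule switchGraph G ∨ HasModule switchGraphᶜ G) :
    ∃ H : SimpleGraph V, GenCospectral G H ∧ ¬ Nonempty (G ≃g H) := by
  have hAB := regularOrthogonalSimilar_switchGraph
  have hB := not_isCograph_switchedGraph
  rcases h with h | h
  · exact h.exists_genCospectral_not_iso hG hAB hB
  · exact h.exists_genCospectral_not_iso hG hAB.compl fun h =>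
      hB (compl_compl switchedGraph ▸ h.compl)

/-! ### Connectivity of cographs -/

section Connectivity

variable {V : Type} {G : SimpleGraph V}

lemma IsCograph.adj_of_path (hG : IsCograph G) {a b c d : V} (hab : G.Adj a b) (hbc : G.Adj b c)
    (hcd : G.Adj c d) (hac : ¬ G.Adj a c) (hbd : ¬ G.Adj b d) : G.Adj a d := by
  by_contra had
  have hne : a ≠ c ∧ b ≠ d ∧ a ≠ d := by
    refine ⟨?_, ?_, ?_⟩ <;> rintro rfl
    exacts [had hcd, had hab, hac hcd.symm]
  have := hab.ne
  have := hbc.ne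
  have := hcd.ne
  refine hG ⟨⟨![a, b, c, d], fun i j hij => ?_⟩, fun i j => ?_⟩
  · fin_cases i <;> fin_cases j <;> simp_all
  · rw [pathGraph_adj]
    change G.Adj (![a, b, c, d] i) (![a, b, c, d] j) ↔ _
    fin_cases i <;> fin_cases j <;> simp_all [G.adj_comm]

lemma exists_reachable_induce_compl_singleton_adj (hG : G.Preconnected) {v : V}
    (u : ({v}ᶜ : Set V)) : ∃ x, (G.induce {v}ᶜ).Reachable u x ∧ G.Adj v x := by
  obtain ⟨p⟩ := hG u v
  obtain ⟨d, -, ⟨x, hx, hfst⟩, hsnd⟩ := p.exists_boundary_dart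
    {w | ∃ x, (G.induce {v}ᶜ).Reachable u x ∧ x = w} ⟨u, .rfl, rfl⟩ (fun ⟨x, _, hx⟩ => x.2 hx)
  have hdv : d.snd = v := by
    by_contra hne
    have hadj : (G.induce {v}ᶜ).Adj x ⟨d.snd, hne⟩ := by simp [hfst, d.adj]
    exact hsnd ⟨⟨d.snd, hne⟩, hx.trans hadj.reachable, rfl⟩
  exact ⟨x, hx, hdv ▸ hfst ▸ d.adj.symm⟩

lemma IsCograph.adj_of_not_preconnected_induce (hG : IsCograph G) (hconn : G.Preconnected) {v : V}
    (hv : ¬ (G.induce {v}ᶜ).Preconnected) (w : V) (hw : w ≠ v) : G.Adj v w := by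
  classical
  by_contra hvw
  obtain ⟨z, hz⟩ : ∃ z, ¬ (G.induce {v}ᶜ).Reachable ⟨w, hw⟩ z := by
    by_contra! h
    exact hv fun a b => (h a).symm.trans (h b)
  obtain ⟨z', hzz', hvz'⟩ := exists_reachable_induce_compl_singleton_adj hconn z
  obtain ⟨w', ⟨p⟩, hvw'⟩ := exists_reachable_induce_compl_singleton_adj hconn ⟨w, hw⟩
  obtain ⟨d, hd, hvy, hvx⟩ := p.exists_boundary_dart {y | ¬ G.Adj v y} hvw (by simpa using hvw')
  have hz' {y : ({v}ᶜ : Set V)} (hy : (G.induce {v}ᶜ).Reachable ⟨w, hw⟩ y) : ¬ G.Adj z' y :=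
    fun h => hz (hy.trans ((Adj.reachable (G := G.induce {v}ᶜ) h).symm.trans hzz'.symm))
  have hwy : (G.induce {v}ᶜ).Reachable ⟨w, hw⟩ d.fst :=
    ⟨p.takeUntil _ (p.dart_fst_mem_support_of_mem_darts hd)⟩
  exact hz' hwy (hG.adj_of_path hvz'.symm (not_not.1 hvx) d.adj.symm
    (hz' (hwy.trans d.adj.reachable)) hvy)

lemma not_preconnected_compl_of_forall_adj [Nontrivial V] {v : V} (h : ∀ w ≠ v, G.Adj v w) :
    ¬ Gᶜ.Preconnected := by
  intro hG
  obtain ⟨w, hw⟩ := hG.exists_adj_of_nontrivial v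
  exact hw.2 (h w hw.ne')

lemma compl_induce (G : SimpleGraph V) (s : Set V) : (G.induce s)ᶜ = Gᶜ.induce s := by
  ext
  simp [Subtype.ext_iff]

theorem IsCograph.subsingleton_of_connected_compl [Finite V] (hG : IsCograph G)
    (hconn : G.Preconnected) (hcompl : Gᶜ.Preconnected) : Subsingleton V := by
  induction V using Finite.induction_subsingleton_or_nontrivial with
  | hbase V => infer_instance
  | hstep V ih =>
    exfalso
    obtain ⟨v, w, hvw⟩ := exists_pair_ne V
    by_cases h : (G.induce {v}ᶜ).Preconnected
    · by_cases h' : (Gᶜ.induce {v}ᶜ).Preconnected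
      · have hsub : Subsingleton ({v}ᶜ : Set V) := by
          refine ih _ (Finite.card_subtype_lt (x := v) (by simp))
            (hG.of_isIndContained ⟨Embedding.induce _⟩) h ?_
          rwa [compl_induce]
        have huniq (u : V) (hu : u ≠ v) : u = w :=
          congrArg Subtype.val (Subsingleton.elim (⟨u, hu⟩ : ({v}ᶜ : Set V)) ⟨w, hvw.symm⟩)
        by_cases hadj : G.Adj v w
        · exact not_preconnected_compl_of_forall_adj (fun u hu => huniq u hu ▸ hadj) hcompl
        · refine not_preconnected_compl_of_forall_adj (G := Gᶜ) (v := v) (fun u hu => ?_) ?_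
          · exact huniq u hu ▸ ⟨hvw, hadj⟩
          · rwa [compl_compl]
      · refine not_preconnected_compl_of_forall_adj (G := Gᶜ)
          (hG.compl.adj_of_not_preconnected_induce hcompl h') ?_
        rwa [compl_compl]
    · exact not_preconnected_compl_of_forall_adj (hG.adj_of_not_preconnected_induce hconn h) hcompl

end Connectivity

/-! ### Isomorphism classes and their components -/

/-- Isomorphism of graphs whose vertex set is some `Fin n`. -/
instance graphIsoSetoid : Setoid (Σ n : ℕ, SimpleGraph (Fin n)) where
  r G H := Nonempty (G.2 ≃g H.2)
  iseqv := ⟨fun _ => ⟨Iso.refl⟩, fun ⟨e⟩ => ⟨e.symm⟩, fun ⟨e⟩ ⟨f⟩ => ⟨e.trans f⟩⟩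

/-- Isomorphism classes of finite graphs. -/
def IsoClass : Type := Quotient graphIsoSetoid

namespace IsoClass

variable {V W : Type} [Finite V] [Finite W]

/-- The isomorphism class of a finite graph. -/
noncomputable def mk (G : SimpleGraph V) : IsoClass :=
  Quotient.mk _ ⟨Nat.card V, G.comap (Finite.equivFin V).symm⟩

/-- The number of vertices of the graphs in a class. -/
noncomputable def order (c : IsoClass) : ℕ := (Quotient.out c).1

/-- A chosen graph in a class. -/
noncomputable def rep (c : IsoClass) : SimpleGraph (Fin c.order) := (Quotient.out c).2

lemma mk_eq_mk {G : SimpleGraph V} {H : SimpleGraph W} : mk G = mk H ↔ Nonempty (G ≃g H) := by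
  let eG := Iso.comap (Finite.equivFin V).symm G
  let eH := Iso.comap (Finite.equivFin W).symm H
  exact Quotient.eq.trans
    ⟨fun ⟨e⟩ => ⟨eG.symm.trans (e.trans eH)⟩, fun ⟨e⟩ => ⟨eG.trans (e.trans eH.symm)⟩⟩

lemma mk_rep (c : IsoClass) : mk c.rep = c := by
  have h : Nonempty (c.rep.comap (Finite.equivFin _).symm ≃g c.rep) := ⟨Iso.comap _ _⟩
  exact (Quotient.sound h).trans (Quotient.out_eq c)

lemma nonempty_rep_mk_iso (G : SimpleGraph V) : Nonempty ((mk G).rep ≃g G) :=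
  mk_eq_mk.1 (mk_rep _)

lemma order_mk (G : SimpleGraph V) : (mk G).order = Nat.card V := by
  obtain ⟨e⟩ := nonempty_rep_mk_iso G
  rw [← Nat.card_congr e.toEquiv, Nat.card_fin]

lemma exists_mk_eq {c : IsoClass} {n : ℕ} (h : c.order = n) :
    ∃ G : SimpleGraph (Fin n), mk G = c := by
  subst h
  exact ⟨c.rep, c.mk_rep⟩

lemma finite_setOf_order_eq (n : ℕ) : {c : IsoClass | c.order = n}.Finite :=
  (Set.finite_range (mk (V := Fin n))).subset fun _ hc => exists_mk_eq hc

lemma connected_rep_mk {G : SimpleGraph V} : (mk G).rep.Connected ↔ G.Connected :=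
  let ⟨e⟩ := nonempty_rep_mk_iso G
  e.connected_iff

lemma isCograph_rep_mk {G : SimpleGraph V} : IsCograph (mk G).rep ↔ IsCograph G :=
  let ⟨e⟩ := nonempty_rep_mk_iso G
  ⟨fun h => h.of_isIndContained ⟨e.symm.toEmbedding⟩, fun h => h.of_isIndContained ⟨e.toEmbedding⟩⟩

lemma hasModule_rep_mk {K : Type} {A : SimpleGraph K} {G : SimpleGraph V} :
    HasModule A (mk G).rep ↔ HasModule A G :=
  let ⟨e⟩ := nonempty_rep_mk_iso G
  ⟨fun h => h.iso e, fun h => h.iso e.symm⟩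

/-- The class of the complements. -/
noncomputable def compl (c : IsoClass) : IsoClass := mk c.repᶜ

lemma compl_mk (G : SimpleGraph V) : (mk G).compl = mk Gᶜ :=
  let ⟨e⟩ := nonempty_rep_mk_iso G
  mk_eq_mk.2 ⟨complIso e⟩

lemma compl_compl (c : IsoClass) : c.compl.compl = c := by
  rw [compl.eq_def c, compl_mk, _root_.compl_compl, mk_rep]

lemma order_compl (c : IsoClass) : c.compl.order = c.order := by
  rw [compl, order_mk, Nat.card_fin]

end IsoClass

lemma classCount_eq_ncard (n : ℕ) (P : SimpleGraph (Fin n) → Prop) :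
    classCount n P = (IsoClass.mk '' {G | P G}).ncard := by
  let f : (Quot fun G H : {G : SimpleGraph (Fin n) // P G} => Nonempty (G.1 ≃g H.1)) → IsoClass :=
    Quot.lift (fun G => .mk G.1) fun _ _ h => IsoClass.mk_eq_mk.2 h
  have hf : Function.Injective f := by
    rintro ⟨G⟩ ⟨H⟩ h
    exact Quot.sound (IsoClass.mk_eq_mk.1 h)
  have hrange : Set.range f = IsoClass.mk '' {G | P G} := by
    rw [Set.range_quot_lift, Set.image_eq_range]
    rfl
  rw [classCount, ← hrange, ← Nat.card_coe_set_eq, Nat.card_congr (Equiv.ofInjective f hf)]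

section Components

variable {V W : Type}

lemma exists_equiv_connectedComponent_of_fibers {ι : Type} {G : SimpleGraph V} (p : V → ι)
    (hp : ∀ u v, G.Adj u v → p u = p v) (hconn : ∀ i, (G.induce (p ⁻¹' {i})).Connected) :
    ∃ e : G.ConnectedComponent ≃ ι, ∀ C, C.supp = p ⁻¹' {e C} := by
  have hreach (u v : V) : G.Reachable u v ↔ p u = p v := by
    refine ⟨fun ⟨w⟩ => ?_, fun h => ?_⟩
    · induction w with
      | nil => rfl
      | cons h _ ih => exact (hp _ _ h).trans (ih ⟨‹_›⟩)
    · exact ((hconn (p v)).preconnected ⟨u, h⟩ ⟨v, rfl⟩).map (Embedding.induce _).toHom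
  let f : G.ConnectedComponent → ι := fun C => C.lift p fun u v w _ => (hreach u v).1 ⟨w⟩
  have hinj : Function.Injective f := by
    refine ConnectedComponent.ind₂ fun u v h => ConnectedComponent.sound ((hreach u v).2 h)
  have hsurj : Function.Surjective f := fun i =>
    let ⟨v, hv⟩ := (hconn i).nonempty.some
    ⟨G.connectedComponentMk v, hv⟩
  refine ⟨.ofBijective f ⟨hinj, hsurj⟩, fun C => Set.ext fun v => ?_⟩
  exact hinj.eq_iff.symm

variable [Finite V] [Finite W]

/-- The multiset of isomorphism classes of the connected components. -/
noncomputable def componentClasses (G : SimpleGraph V) : Multiset IsoClass :=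
  letI := Fintype.ofFinite G.ConnectedComponent
  Finset.univ.val.map fun C : G.ConnectedComponent => .mk (G.induce C.supp)

lemma mem_componentClasses {G : SimpleGraph V} {c : IsoClass} :
    c ∈ componentClasses G ↔ ∃ C : G.ConnectedComponent, .mk (G.induce C.supp) = c := by
  simp [componentClasses]

lemma componentClasses_eq_of_fibers {ι : Type} [Fintype ι] {G : SimpleGraph V} (p : V → ι)
    (hp : ∀ u v, G.Adj u v → p u = p v) (c : ι → IsoClass)
    (hconn : ∀ i, (G.induce (p ⁻¹' {i})).Connected)
    (hc : ∀ i, .mk (G.induce (p ⁻¹' {i})) = c i) :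
    componentClasses G = Finset.univ.val.map c := by
  let _ := Fintype.ofFinite G.ConnectedComponent
  obtain ⟨e, he⟩ := exists_equiv_connectedComponent_of_fibers p hp hconn
  rw [componentClasses, ← Finset.map_univ_equiv e, Finset.map_val, Multiset.map_map]
  refine Multiset.map_congr (by congr!) fun C _ => ?_
  simp only [Function.comp_apply, Equiv.coe_toEmbedding, ← hc]
  exact IsoClass.mk_eq_mk.2 ⟨⟨Equiv.setCongr (he C), Iff.rfl⟩⟩

lemma componentClasses_eq_of_iso {G : SimpleGraph V} {H : SimpleGraph W} (e : G ≃g H) :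
    componentClasses G = componentClasses H := by
  let _ := Fintype.ofFinite H.ConnectedComponent
  let p (v : V) := H.connectedComponentMk (e v)
  have key (C : H.ConnectedComponent) : Nonempty (G.induce (p ⁻¹' {C}) ≃g H.induce C.supp) :=
    ⟨e.toEquiv.subtypeEquiv fun _ => Iff.rfl, e.map_adj_iff⟩
  exact componentClasses_eq_of_fibers p
    (fun u v h => ConnectedComponent.sound (e.map_adj_iff.2 h).reachable) _
    (fun C => (key C).some.connected_iff.2 C.connected_toSimpleGraph)
    (fun C => IsoClass.mk_eq_mk.2 (key C))

lemma exists_equiv_of_map_univ_eq {α β γ : Type*} [Fintype α] [Fintype β] {f : α → γ} {g : β → γ}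
    (h : Finset.univ.val.map f = Finset.univ.val.map g) : ∃ σ : α ≃ β, ∀ a, g (σ a) = f a := by
  classical
  have hcard (c : γ) : Nonempty ({a // f a = c} ≃ {b // g b = c}) := by
    have hc := congrArg (Multiset.count c) h
    rw [Multiset.count_map, Multiset.count_map] at hc
    rw [← Fintype.card_eq, Fintype.card_subtype, Fintype.card_subtype]
    simpa only [Finset.card_def, Finset.filter_val, eq_comm] using hc
  exact ⟨Equiv.ofFiberEquiv fun c => (hcard c).some, Equiv.ofFiberEquiv_map _⟩

lemma nonempty_iso_of_componentClasses_eq {G : SimpleGraph V} {H : SimpleGraph W}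
    (h : componentClasses G = componentClasses H) : Nonempty (G ≃g H) := by
  let _ := Fintype.ofFinite G.ConnectedComponent
  let _ := Fintype.ofFinite H.ConnectedComponent
  obtain ⟨σ, hσ⟩ := exists_equiv_of_map_univ_eq h
  have φ (C : G.ConnectedComponent) : G.induce C.supp ≃g H.induce (σ C).supp :=
    (IsoClass.mk_eq_mk.1 (hσ C).symm).some
  let F : V ≃ W := (Equiv.sigmaFiberEquiv G.connectedComponentMk).symm.trans
    ((Equiv.sigmaCongr σ fun C => (φ C).toEquiv).trans
      (Equiv.sigmaFiberEquiv H.connectedComponentMk))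
  have hF {C : G.ConnectedComponent} (u : C.supp) : F u = φ C u := by
    obtain ⟨u, rfl⟩ := u
    rfl
  have hmk (u : V) : H.connectedComponentMk (F u) = σ (G.connectedComponentMk u) := by
    rw [hF (C := G.connectedComponentMk u) ⟨u, rfl⟩]
    exact (φ _ _).2
  refine ⟨⟨F, fun {u v} => ?_⟩⟩
  by_cases huv : G.connectedComponentMk u = G.connectedComponentMk v
  · rw [hF (C := G.connectedComponentMk v) ⟨u, huv⟩, hF (C := G.connectedComponentMk v) ⟨v, rfl⟩]
    exact (φ (G.connectedComponentMk v)).map_adj_iff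
  · refine iff_of_false (fun h => huv ?_) fun h => huv (ConnectedComponent.sound h.reachable)
    rw [← σ.injective.eq_iff, ← hmk, ← hmk]
    exact ConnectedComponent.sound h.reachable

/-- The disjoint union of a family of graphs. -/
def sigmaGraph {ι : Type} {U : ι → Type} (G : ∀ i, SimpleGraph (U i)) : SimpleGraph (Σ i, U i) where
  Adj a b := ∃ h : a.1 = b.1, (G b.1).Adj (h ▸ a.2) b.2
  symm := ⟨by
    rintro ⟨i, u⟩ ⟨j, v⟩ ⟨h, hadj⟩
    obtain rfl : i = j := h
    exact ⟨rfl, hadj.symm⟩⟩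
  loopless := ⟨fun _ ⟨_, hadj⟩ => hadj.ne rfl⟩

lemma componentClasses_sigmaGraph {ι : Type} [Fintype ι] {U : ι → Type} [∀ i, Finite (U i)]
    {G : ∀ i, SimpleGraph (U i)} (hG : ∀ i, (G i).Connected) :
    componentClasses (sigmaGraph G) = Finset.univ.val.map fun i => .mk (G i) := by
  have key (i : ι) : Nonempty ((sigmaGraph G).induce (Sigma.fst ⁻¹' {i}) ≃g G i) := by
    refine ⟨⟨Equiv.sigmaSubtype i, ?_⟩⟩
    rintro ⟨⟨_, u⟩, rfl⟩ ⟨⟨_, v⟩, hv⟩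
    cases hv
    exact ⟨fun h => ⟨rfl, h⟩, fun ⟨_, h⟩ => h⟩
  have hfst (a b) (h : (sigmaGraph G).Adj a b) : a.1 = b.1 := h.fst
  exact componentClasses_eq_of_fibers Sigma.fst hfst _
    (fun i => (key i).some.connected_iff.2 (hG i)) fun i => IsoClass.mk_eq_mk.2 (key i)

namespace IsoClass

/-- The multiset of connected components of a class. -/
noncomputable def components (c : IsoClass) : Multiset IsoClass := componentClasses c.rep

lemma components_mk (G : SimpleGraph V) : (mk G).components = componentClasses G :=
  let ⟨e⟩ := nonempty_rep_mk_iso G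
  componentClasses_eq_of_iso e

lemma components_injective : Function.Injective components := fun c d h => by
  rw [← mk_rep c, ← mk_rep d]
  exact mk_eq_mk.2 (nonempty_iso_of_componentClasses_eq h)

lemma connected_rep_of_mem_components {c d : IsoClass} (h : d ∈ c.components) :
    d.rep.Connected := by
  obtain ⟨C, rfl⟩ := mem_componentClasses.1 h
  exact connected_rep_mk.2 C.connected_toSimpleGraph

lemma exists_components_eq {M : Multiset IsoClass} (hM : ∀ c ∈ M, c.rep.Connected) :
    ∃ c : IsoClass, c.components = M := by
  obtain ⟨l, rfl⟩ := Quot.exists_rep M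
  refine ⟨mk (sigmaGraph fun i => (l.get i).rep), ?_⟩
  rw [components_mk, componentClasses_sigmaGraph fun i => hM _ (List.get_mem l i)]
  simp only [mk_rep, Fin.univ_val_map, List.ofFn_get]
  rfl

lemma sum_map_order_components (c : IsoClass) : (c.components.map order).sum = c.order := by
  let _ := Fintype.ofFinite c.rep.ConnectedComponent
  conv_rhs => rw [← Nat.card_fin c.order,
    Nat.card_congr (Equiv.sigmaFiberEquiv c.rep.connectedComponentMk).symm, Nat.card_sigma]
  rw [components, componentClasses, Multiset.map_map, Finset.sum_eq_multiset_sum]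
  exact congrArg Multiset.sum (Multiset.map_congr rfl fun C _ => order_mk _)

end IsoClass

end Components

/-! ### Counting multisets -/

section Multisets

open scoped ENNReal

lemma tsum_pi_prod_eq_prod_tsum {ι κ : Type*} [Fintype ι] (g : ι → κ → ℝ≥0∞) :
    ∑' f : ι → κ, ∏ i, g i (f i) = ∏ i, ∑' k, g i k := by
  refine Fintype.induction_empty_option (P := fun ι [Fintype ι] => ∀ g : ι → κ → ℝ≥0∞,
    ∑' f : ι → κ, ∏ i, g i (f i) = ∏ i, ∑' k, g i k) ?_ ?_ ?_ ι g
  · intro ι ι' _ e ih g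
    let _ := Fintype.ofEquiv _ e.symm
    rw [← Equiv.prod_comp e, ← ih, ← (Equiv.arrowCongr e (Equiv.refl κ)).tsum_eq]
    refine tsum_congr fun f => ?_
    rw [← Equiv.prod_comp e]
    simp
  · intro g
    simp
  · intro ι _ ih g
    rw [Fintype.prod_option, ← ih, ← (Equiv.piOptionEquivProd (β := fun _ => κ)).symm.tsum_eq,
      ENNReal.tsum_prod']
    simp only [Fintype.prod_option, Equiv.piOptionEquivProd, Equiv.coe_fn_symm_mk,
      ENNReal.tsum_mul_left, ENNReal.tsum_mul_right]

lemma tsum_multiset_prod_map {α : Type*} [Fintype α] (w : α → ℝ≥0∞) :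
    ∑' M : Multiset α, (M.map w).prod = ∏ a, (1 - w a)⁻¹ := by
  classical
  simp only [← ENNReal.tsum_geometric, ← tsum_pi_prod_eq_prod_tsum]
  rw [← (Multiset.toFinsupp.toEquiv.trans Finsupp.equivFunOnFinite).tsum_eq]
  refine tsum_congr fun M => ?_
  rw [Finset.prod_multiset_map_count]
  refine Finset.prod_subset (Finset.subset_univ _) fun a _ ha => ?_
  rw [Multiset.count_eq_zero.2 (by simpa using ha), pow_zero]

lemma tsum_comp_eq_tsum_encard_mul {β : Type*} (v : β → ℕ) (f : ℕ → ℝ≥0∞) :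
    ∑' b, f (v b) = ∑' n, {b | v b = n}.encard * f n := by
  rw [← ENNReal.tsum_fiberwise _ v]
  refine tsum_congr fun n => ?_
  rw [tsum_congr fun b : v ⁻¹' {n} => congrArg f b.2, ENNReal.tsum_set_const]
  rfl

lemma tsum_setOf_lt_comp {β : Type*} {v : β → ℕ} {c : ℕ → ℕ}
    (hc : ∀ n, {b | v b = n}.encard = c n) (f : ℕ → ℝ≥0∞) (N : ℕ) :
    ∑' b : {b | v b < N}, f (v b) = ∑ n ∈ Finset.range N, c n * f n := by
  have hind (b : β) : {b | v b < N}.indicator (fun b => f (v b)) b =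
      (Set.Iio N).indicator f (v b) := rfl
  rw [tsum_subtype {b | v b < N} fun b => f (v b), tsum_congr hind, tsum_comp_eq_tsum_encard_mul,
    tsum_eq_sum (s := Finset.range N)]
  · refine Finset.sum_congr rfl fun n hn => ?_
    rw [Set.indicator_of_mem (show n ∈ Set.Iio N from Finset.mem_range.1 hn), hc,
      ENat.toENNReal_coe]
  · intro n hn
    rw [Set.indicator_of_notMem (by simpa using hn), mul_zero]

lemma prod_setOf_lt_comp {β M : Type*} [CommMonoid M] {v : β → ℕ} {c : ℕ → ℕ}
    (hc : ∀ n, {b | v b = n}.encard = c n) (f : ℕ → M) (N : ℕ) [Fintype {b // v b < N}] :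
    ∏ b : {b // v b < N}, f (v b) = ∏ n ∈ Finset.range N, f n ^ c n := by
  classical
  rw [← Finset.prod_fiberwise_of_maps_to (g := fun b : {b // v b < N} => v b)
    (t := Finset.range N) fun b _ => Finset.mem_range.2 b.2]
  refine Finset.prod_congr rfl fun n hn => ?_
  have hcard : Finset.card {b : {b // v b < N} | v b = n} = c n := by
    have himage : Subtype.val '' {b : {b // v b < N} | v b = n} = {b | v b = n} := by
      ext b
      simpa using fun h => h.trans_lt (Finset.mem_range.1 hn)
    rw [← Nat.cast_inj (R := ℕ∞), ← hc, ← himage, Subtype.val_injective.encard_image,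
      ← Set.encard_coe_eq_coe_finsetCard, Finset.coe_filter_univ]
  rw [Finset.prod_congr rfl fun b hb => congrArg f (Finset.mem_filter.1 hb).2, Finset.prod_const,
    hcard]

lemma sum_map_eq_zero_iff_of_pos {α : Type*} {size : α → ℕ} (hpos : ∀ a, 0 < size a)
    {M : Multiset α} : (M.map size).sum = 0 ↔ M = 0 := by
  refine ⟨fun hM => Multiset.eq_zero_of_forall_notMem fun a ha => (hpos a).ne' ?_, ?_⟩
  · exact Multiset.sum_eq_zero_iff.1 hM _ (Multiset.mem_map_of_mem size ha)
  · rintro rfl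
    rfl

/-- `e` is the Euler transform of `b`: if `b n` counts the objects of size `n`, then `e n` counts
the multisets of such objects of total size `n`. Cardinalities are taken in `ℕ∞`, so that both
counts are finite. -/
def IsEulerTransform (b e : ℕ → ℕ) : Prop :=
  ∃ (α : Type) (size : α → ℕ), (∀ a, 0 < size a) ∧ (∀ n, {a | size a = n}.encard = b n) ∧
    ∀ n, {M : Multiset α | (M.map size).sum = n}.encard = e n

namespace IsEulerTransform

variable {b e : ℕ → ℕ}

lemma apply_zero_left (h : IsEulerTransform b e) : b 0 = 0 := by
  obtain ⟨α, size, hpos, hb, -⟩ := h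
  have hempty : {a | size a = 0} = ∅ := Set.eq_empty_of_forall_notMem fun a => (hpos a).ne'
  simpa [hempty] using (hb 0).symm

lemma apply_zero_right (h : IsEulerTransform b e) : e 0 = 1 := by
  obtain ⟨α, size, hpos, -, he⟩ := h
  have hempty : {M : Multiset α | (M.map size).sum = 0} = {0} := by
    ext M
    exact sum_map_eq_zero_iff_of_pos hpos
  have h0 := he 0
  rw [hempty, Set.encard_singleton] at h0
  exact_mod_cast h0.symm

lemma apply_one_right (h : IsEulerTransform b e) : e 1 = b 1 := by
  obtain ⟨α, size, hpos, hb, he⟩ := h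
  have hsingle : {M : Multiset α | (M.map size).sum = 1} = singleton '' {a | size a = 1} := by
    ext M
    refine ⟨fun hM => ?_, by rintro ⟨a, ha, rfl⟩; simpa using ha⟩
    induction M using Multiset.induction with
    | empty => simp at hM
    | cons a M _ =>
      rw [Set.mem_ofPred_eq, Multiset.map_cons, Multiset.sum_cons] at hM
      have ha := hpos a
      have hM0 : M = 0 := (sum_map_eq_zero_iff_of_pos hpos).1 (by omega)
      exact ⟨a, by simp only [Set.mem_ofPred_eq]; omega, by rw [hM0]; rfl⟩
  rw [← Nat.cast_inj (R := ℕ∞), ← he, ← hb, hsingle,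
    Function.Injective.encard_image fun _ _ => Multiset.singleton_inj.1]

lemma one_le (h : IsEulerTransform b e) (h1 : 1 ≤ b 1) (n : ℕ) : 1 ≤ e n := by
  obtain ⟨α, size, -, hb, he⟩ := h
  rw [← Nat.cast_le (α := ℕ∞), Nat.cast_one, ← hb, Set.one_le_encard_iff_nonempty] at h1
  obtain ⟨a, ha : size a = 1⟩ := h1
  rw [← Nat.cast_le (α := ℕ∞), Nat.cast_one, ← he, Set.one_le_encard_iff_nonempty]
  exact ⟨Multiset.replicate n a, by simp [ha]⟩

lemma mul_le (h : IsEulerTransform b e) {m n : ℕ} (hmn : m < n) : b m * b n ≤ e (m + n) := by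
  obtain ⟨α, size, -, hb, he⟩ := h
  rw [← Nat.cast_le (α := ℕ∞), Nat.cast_mul, ← hb, ← hb, ← he, ← Set.encard_prod]
  refine Set.encard_le_encard_of_injOn (f := fun p : α × α => p.1 ::ₘ {p.2}) ?_ ?_
  · rintro ⟨a, a'⟩ ⟨ha, ha'⟩
    simpa using congrArg₂ (· + ·) ha ha'
  · rintro ⟨a, a'⟩ ⟨ha, -⟩ ⟨c, c'⟩ ⟨-, hc'⟩ (heq : a ::ₘ {a'} = c ::ₘ {c'})
    have hac' : a ≠ c' := by
      rintro rfl
      exact hmn.ne (ha.symm.trans hc')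
    have hac : a = c := by
      have ha_mem : a ∈ c ::ₘ {c'} := heq ▸ Multiset.mem_cons_self a _
      simpa [hac'] using ha_mem
    subst hac
    simpa using heq

end IsEulerTransform

lemma prod_map_pow_eq_pow_sum_map {α R : Type*} [CommMonoid R] (size : α → ℕ) (y : R)
    (M : Multiset α) : (M.map fun a => y ^ size a).prod = y ^ (M.map size).sum := by
  induction M using Multiset.induction with
  | empty => simp
  | cons a M ih => simp only [Multiset.map_cons, Multiset.prod_cons, Multiset.sum_cons, ih, pow_add]

lemma tsum_pow_sum_map_lt {α : Type*} {size : α → ℕ} {b : ℕ → ℕ}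
    (hb : ∀ n, {a | size a = n}.encard = b n) (y : ℝ≥0∞) (N : ℕ) :
    ∑' M : Multiset {a // size a < N}, y ^ ((M.map (↑)).map size).sum =
      ∏ n ∈ Finset.range N, ((1 - y ^ n)⁻¹) ^ b n := by
  have hfin : {a | size a < N}.Finite := by
    refine (Set.finite_iUnion fun n : Fin N => Set.finite_of_encard_eq_coe (hb n)).subset ?_
    exact fun a ha => Set.mem_iUnion.2 ⟨⟨size a, ha⟩, rfl⟩
  let _ : Fintype {a // size a < N} := hfin.fintype
  rw [← prod_setOf_lt_comp hb fun n => (1 - y ^ n)⁻¹, ← tsum_multiset_prod_map]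
  refine tsum_congr fun M => ?_
  rw [prod_map_pow_eq_pow_sum_map fun a : {a // size a < N} => size a, Multiset.map_map]
  rfl

lemma mem_range_map_val_or_mem_image_singleton {α : Type*} {size : α → ℕ} (hpos : ∀ a, 0 < size a)
    {N : ℕ} {M : Multiset α} (hM : (M.map size).sum < N + 1) :
    M ∈ Set.range (Multiset.map ((↑) : {a // size a < N} → α)) ∪
      singleton '' {a | size a = N} := by
  by_cases hlt : ∀ a ∈ M, size a < N
  · lift M to Multiset {a // size a < N} using hlt
    exact .inl ⟨M, rfl⟩
  · push Not at hlt
    obtain ⟨a, ha, haN⟩ := hlt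
    obtain ⟨M, rfl⟩ := Multiset.exists_cons_of_mem ha
    rw [Multiset.map_cons, Multiset.sum_cons] at hM
    have hM0 : M = 0 := (sum_map_eq_zero_iff_of_pos hpos).1 (by omega)
    exact .inr ⟨a, show size a = N by omega, by rw [hM0]; rfl⟩

namespace IsEulerTransform

variable {b e : ℕ → ℕ}

lemma sum_mul_pow_le_prod (h : IsEulerTransform b e) (y : ℝ≥0∞) (N : ℕ) :
    ∑ n ∈ Finset.range (N + 1), e n * y ^ n ≤
      ∏ n ∈ Finset.range N, ((1 - y ^ n)⁻¹) ^ b n + b N * y ^ N := by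
  obtain ⟨α, size, hpos, hb, he⟩ := h
  let wt : Multiset α → ℝ≥0∞ := fun M => y ^ (M.map size).sum
  have hsmall : ∑' M : Set.range (Multiset.map ((↑) : {a // size a < N} → α)), wt M =
      ∏ n ∈ Finset.range N, ((1 - y ^ n)⁻¹) ^ b n := by
    rw [tsum_range wt (Multiset.map_injective Subtype.val_injective), tsum_pow_sum_map_lt hb]
  have hlarge : ∑' M : (singleton '' {a | size a = N} : Set (Multiset α)), wt M =
      b N * y ^ N := by
    rw [tsum_image wt fun _ _ _ _ => Multiset.singleton_inj.1, ← ENat.toENNReal_coe, ← hb,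
      ← ENNReal.tsum_set_const]
    refine tsum_congr fun a => ?_
    simp [wt, show size a = N from a.2]
  rw [← tsum_setOf_lt_comp he (fun n => y ^ n), ← hsmall, ← hlarge]
  refine (ENNReal.tsum_mono_subtype wt fun M hM => ?_).trans (ENNReal.tsum_union_le wt _ _)
  exact mem_range_map_val_or_mem_image_singleton hpos hM

lemma prod_le_tsum (h : IsEulerTransform b e) (y : ℝ≥0∞) (N : ℕ) :
    ∏ n ∈ Finset.range N, ((1 - y ^ n)⁻¹) ^ b n ≤ ∑' n, e n * y ^ n := by
  obtain ⟨α, size, -, hb, he⟩ := h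
  have hall := tsum_comp_eq_tsum_encard_mul (fun M : Multiset α => (M.map size).sum) (y ^ ·)
  simp only [he, ENat.toENNReal_coe] at hall
  rw [← hall, ← tsum_pow_sum_map_lt hb]
  exact ENNReal.tsum_comp_le_tsum_of_injective
    (Multiset.map_injective Subtype.val_injective) fun M => y ^ (M.map size).sum

end IsEulerTransform

end Multisets

/-! ### Ratios of coefficients -/

section GeneratingFunctions

/-- The generating polynomial `∑ c n xⁿ` over `n < N`: a truncation of the generating function of
the counting sequence `c`. -/
noncomputable def partialSum (c : ℕ → ℕ) (N : ℕ) (x : ℝ) : ℝ := ∑ n ∈ Finset.range N, c n * x ^ n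

/-- The Taylor remainder `y ^ 2 / 2 + y ^ 3 / 3 + ⋯` of `-log (1 - y)` after its linear term. -/
noncomputable def logExcess (y : ℝ) : ℝ := -Real.log (1 - y) - y

/-- The amount by which the logarithm of the Euler product `∏ (1 - xⁿ)⁻ᶜ⁽ⁿ⁾` over `n < N` exceeds
`partialSum c N x`. -/
noncomputable def excess (c : ℕ → ℕ) (N : ℕ) (x : ℝ) : ℝ :=
  ∑ n ∈ Finset.range N, c n * logExcess (x ^ n)

variable {b e c : ℕ → ℕ} {x y : ℝ} {N : ℕ}

lemma logExcess_nonneg (hy : y < 1) : 0 ≤ logExcess y := by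
  have := Real.log_le_sub_one_of_pos (sub_pos.2 hy)
  unfold logExcess
  linarith

lemma logExcess_le (hy : y < 1) : logExcess y ≤ y ^ 2 / (1 - y) := by
  have hpos : 0 < 1 - y := sub_pos.2 hy
  have hlog := Real.log_le_sub_one_of_pos (inv_pos.2 hpos)
  rw [Real.log_inv] at hlog
  have hinv : y ^ 2 / (1 - y) = (1 - y)⁻¹ - 1 - y := by
    field_simp
    ring
  unfold logExcess
  linarith

lemma mul_logExcess_pow_nonneg (hc0 : c 0 = 0) (hx0 : 0 ≤ x) (hx1 : x < 1) (n : ℕ) :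
    0 ≤ c n * logExcess (x ^ n) := by
  obtain rfl | hn := eq_or_ne n 0
  · simp [hc0]
  · exact mul_nonneg (Nat.cast_nonneg _) (logExcess_nonneg (pow_lt_one₀ hx0 hx1 hn))

lemma mul_logExcess_pow_le (hc0 : c 0 = 0) {r : ℝ} (hx0 : 0 ≤ x) (hxr : x ≤ r) (hr : r < 1)
    (n : ℕ) : c n * logExcess (x ^ n) ≤ c n * (r ^ 2) ^ n * (1 - r)⁻¹ := by
  obtain rfl | hn := eq_or_ne n 0
  · simp [hc0]
  have hxn : x ^ n ≤ r := (pow_le_of_le_one hx0 (hxr.trans hr.le) hn).trans hxr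
  rw [mul_assoc]
  refine mul_le_mul_of_nonneg_left ((logExcess_le (hxn.trans_lt hr)).trans ?_) (Nat.cast_nonneg _)
  rw [div_eq_mul_inv, ← pow_mul, ← pow_mul, mul_comm n]
  have hr0 : 0 ≤ r := hx0.trans hxr
  have : 0 < 1 - r := sub_pos.2 hr
  have hinv : 0 ≤ (1 - x ^ n)⁻¹ := inv_nonneg.2 (sub_nonneg.2 (hxn.trans hr.le))
  gcongr

lemma partialSum_mono_right (hx : 0 ≤ x) : Monotone fun N => partialSum c N x := fun _ _ hMN =>
  Finset.sum_le_sum_of_subset_of_nonneg (Finset.range_mono hMN) fun _ _ _ => by positivity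

lemma partialSum_nonneg (hx : 0 ≤ x) : 0 ≤ partialSum c N x :=
  Finset.sum_nonneg fun _ _ => by positivity

lemma partialSum_succ : partialSum c (N + 1) x = partialSum c N x + c N * x ^ N :=
  Finset.sum_range_succ _ _

lemma prod_inv_one_sub_ofReal_pow (hb0 : b 0 = 0) (hx0 : 0 ≤ x) (hx1 : x < 1) (N : ℕ) :
    ∏ n ∈ Finset.range N, ((1 - ENNReal.ofReal x ^ n)⁻¹) ^ b n =
      ENNReal.ofReal (Real.exp (partialSum b N x + excess b N x)) := by
  rw [partialSum, excess, ← Finset.sum_add_distrib, Real.exp_sum,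
    ENNReal.ofReal_prod_of_nonneg fun _ _ => (Real.exp_pos _).le]
  refine Finset.prod_congr rfl fun n _ => ?_
  obtain rfl | hn := eq_or_ne n 0
  · simp [hb0]
  have hpos : 0 < 1 - x ^ n := sub_pos.2 (pow_lt_one₀ hx0 hx1 hn)
  rw [← mul_add, Real.exp_nat_mul, logExcess, add_sub_cancel, Real.exp_neg, Real.exp_log hpos,
    ENNReal.ofReal_pow (inv_nonneg.2 hpos.le), ENNReal.ofReal_inv_of_pos hpos,
    ENNReal.ofReal_sub _ (pow_nonneg hx0 n), ENNReal.ofReal_one, ENNReal.ofReal_pow hx0]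

namespace IsEulerTransform

lemma partialSum_le (h : IsEulerTransform b e) (hx0 : 0 ≤ x) (hx1 : x < 1) :
    partialSum e (N + 1) x ≤ Real.exp (partialSum b N x + excess b N x) + b N * x ^ N := by
  have hle := h.sum_mul_pow_le_prod (ENNReal.ofReal x) N
  rw [prod_inv_one_sub_ofReal_pow h.apply_zero_left hx0 hx1] at hle
  rw [← ENNReal.ofReal_le_ofReal_iff (by positivity), partialSum,
    ENNReal.ofReal_add (by positivity) (by positivity),
    ENNReal.ofReal_sum_of_nonneg fun _ _ => by positivity]
  simpa only [ENNReal.ofReal_mul (Nat.cast_nonneg _), ENNReal.ofReal_natCast,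
    ENNReal.ofReal_pow hx0] using hle

lemma exp_le_of_hasSum (h : IsEulerTransform b e) (hx0 : 0 ≤ x) (hx1 : x < 1) {C : ℝ}
    (hC : HasSum (fun n => e n * x ^ n) C) : Real.exp (partialSum b N x + excess b N x) ≤ C := by
  have hle := h.prod_le_tsum (ENNReal.ofReal x) N
  rw [prod_inv_one_sub_ofReal_pow h.apply_zero_left hx0 hx1] at hle
  rw [← ENNReal.ofReal_le_ofReal_iff (hC.nonneg fun _ => by positivity), ← hC.tsum_eq,
    ENNReal.ofReal_tsum_of_nonneg (fun _ => by positivity) hC.summable]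
  simpa only [ENNReal.ofReal_mul (Nat.cast_nonneg _), ENNReal.ofReal_natCast,
    ENNReal.ofReal_pow hx0] using hle

end IsEulerTransform

lemma exp_add_sub_le {s t δ : ℝ} (hs : 0 ≤ s) (hst : s ≤ t) (hδ : 0 ≤ δ) :
    Real.exp (s + δ) - s ≤ Real.exp (t + δ) - t := by
  have hstep : t - s + 1 ≤ Real.exp (t - s) := Real.add_one_le_exp (t - s)
  have hone : 1 ≤ Real.exp (s + δ) := Real.one_le_exp (add_nonneg hs hδ)
  have hmul : Real.exp (t + δ) = Real.exp (s + δ) * Real.exp (t - s) := by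
    rw [← Real.exp_add]
    ring_nf
  nlinarith

lemma excess_le (hc0 : c 0 = 0) (hx0 : 0 ≤ x) (hx1 : x < 1) :
    excess c N x ≤ partialSum c N x * (x / (1 - x)) := by
  rw [excess, partialSum, Finset.sum_mul]
  refine Finset.sum_le_sum fun n _ => ?_
  obtain rfl | hn := eq_or_ne n 0
  · simp [hc0]
  calc c n * logExcess (x ^ n)
      ≤ c n * (x ^ 2) ^ n * (1 - x)⁻¹ := mul_logExcess_pow_le hc0 hx0 le_rfl hx1 n
    _ = c n * x ^ n * (x ^ n / (1 - x)) := by ring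
    _ ≤ c n * x ^ n * (x / (1 - x)) := by
        have : 0 < 1 - x := sub_pos.2 hx1
        have hpow : x ^ n ≤ x := pow_le_of_le_one hx0 hx1.le hn
        gcongr

namespace IsEulerTransform

lemma one_sub_add_le_partialSum (h : IsEulerTransform b e) (hb1 : b 1 ≤ 1) {d : ℕ → ℕ}
    (hd0 : d 0 = 0) (hd1 : d 1 = 0) (hd : ∀ n ≥ 2, 2 * b n + d n ≤ e n) (hx : 0 ≤ x) (N : ℕ) :
    1 - x + partialSum d (N + 1) x + 2 * partialSum b (N + 1) x ≤ partialSum e (N + 1) x := by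
  induction N with
  | zero =>
    simpa [partialSum, hd0, h.apply_zero_left, h.apply_zero_right] using hx
  | succ N ih =>
    obtain rfl | hN := Nat.eq_zero_or_pos N
    · have hb1' : (b 1 : ℝ) ≤ 1 := by exact_mod_cast hb1
      simp only [partialSum, Finset.sum_range_succ, Finset.sum_range_zero, hd0, hd1,
        h.apply_zero_left, h.apply_zero_right, h.apply_one_right]
      norm_num
      nlinarith
    · have hcoeff : (2 * b (N + 1) + d (N + 1) : ℝ) ≤ e (N + 1) := by
        exact_mod_cast hd (N + 1) (by omega)
      have hterm := mul_le_mul_of_nonneg_right hcoeff (pow_nonneg hx (N + 1))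
      simp only [partialSum_succ (N := N + 1)]
      linarith

lemma partialSum_le_of_exp_le (h : IsEulerTransform b e) (hx0 : 0 ≤ x) (hx1 : x < 1)
    {s τ δ : ℝ} {N₀ : ℕ} (hs : ∀ N ≥ N₀, s + 2 * partialSum b (N + 1) x ≤ partialSum e (N + 1) x)
    (hδ : 0 ≤ δ) (hexcess : ∀ N, partialSum b N x ≤ τ → excess b N x ≤ δ)
    (hexp : Real.exp (τ + δ) ≤ s + 2 * τ) (hbase : partialSum b N₀ x ≤ τ) (N : ℕ) :
    partialSum b N x ≤ τ := by
  obtain hN | hN := le_total N N₀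
  · exact (partialSum_mono_right hx0 hN).trans hbase
  induction N, hN using Nat.le_induction with
  | base => exact hbase
  | succ N hN ih =>
    have hrec : s + partialSum b (N + 1) x + partialSum b N x ≤
        Real.exp (partialSum b N x + excess b N x) := by
      have hsucc : partialSum b (N + 1) x = partialSum b N x + b N * x ^ N := partialSum_succ
      linarith [hs N hN, h.partialSum_le hx0 hx1 (N := N)]
    have hmono := exp_add_sub_le (partialSum_nonneg hx0) ih hδ
    have hδN : Real.exp (partialSum b N x + excess b N x) ≤ Real.exp (partialSum b N x + δ) :=
      Real.exp_le_exp.2 (by linarith [hexcess N ih])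
    linarith

lemma partialSum_one_div_sixteen_le (h : IsEulerTransform b e) (hb1 : b 1 ≤ 1)
    (hbe : ∀ n ≥ 2, 2 * b n ≤ e n) (N : ℕ) : partialSum b N (1 / 16) ≤ 1 / 4 := by
  have hx1 : (1 / 16 : ℝ) < 1 := by norm_num
  refine h.partialSum_le_of_exp_le (s := 15 / 16) (δ := 1 / 60) (N₀ := 0) (by norm_num) hx1
    (fun N _ => ?_) (by norm_num) (fun N hN => ?_) ?_ (by norm_num [partialSum]) N
  · have := h.one_sub_add_le_partialSum hb1 (d := 0) rfl rfl hbe (x := 1 / 16) (by norm_num) N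
    have h0 : partialSum 0 (N + 1) (1 / 16) = 0 := by simp [partialSum]
    linarith
  · have := excess_le h.apply_zero_left (by norm_num) hx1 (N := N)
    norm_num at this
    linarith
  · have := Real.abs_exp_sub_one_sub_id_le (x := 1 / 4 + 1 / 60) (by norm_num [abs_of_pos])
    rw [abs_le] at this
    norm_num at this ⊢
    linarith

end IsEulerTransform

/-- The limit of `excess c N x` as `N` tends to infinity. -/
noncomputable def totalExcess (c : ℕ → ℕ) (x : ℝ) : ℝ := ∑' n, c n * logExcess (x ^ n)

lemma summable_mul_logExcess_pow (hc0 : c 0 = 0) {r : ℝ} (hx0 : 0 ≤ x) (hxr : x ≤ r) (hr : r < 1)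
    (hs : Summable fun n => (c n : ℝ) * (r ^ 2) ^ n) :
    Summable fun n => (c n : ℝ) * logExcess (x ^ n) :=
  .of_nonneg_of_le (mul_logExcess_pow_nonneg hc0 hx0 (hxr.trans_lt hr))
    (mul_logExcess_pow_le hc0 hx0 hxr hr) (hs.mul_right _)

lemma totalExcess_nonneg (hc0 : c 0 = 0) (hx0 : 0 ≤ x) (hx1 : x < 1) : 0 ≤ totalExcess c x :=
  tsum_nonneg (mul_logExcess_pow_nonneg hc0 hx0 hx1)

lemma excess_le_totalExcess (hc0 : c 0 = 0) {r : ℝ} (hx0 : 0 ≤ x) (hxr : x ≤ r) (hr : r < 1)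
    (hs : Summable fun n => (c n : ℝ) * (r ^ 2) ^ n) : excess c N x ≤ totalExcess c x :=
  (summable_mul_logExcess_pow hc0 hx0 hxr hr hs).sum_le_tsum _ fun n _ =>
    mul_logExcess_pow_nonneg hc0 hx0 (hxr.trans_lt hr) n

lemma excess_mono_left (hc0 : c 0 = 0) (hbc : ∀ n, b n ≤ c n) (hx0 : 0 ≤ x) (hx1 : x < 1) :
    excess b N x ≤ excess c N x := by
  refine Finset.sum_le_sum fun n _ => ?_
  obtain rfl | hn := eq_or_ne n 0
  · simp [hc0, Nat.le_zero.1 (hc0 ▸ hbc 0)]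
  · exact mul_le_mul_of_nonneg_right (by exact_mod_cast hbc n)
      (logExcess_nonneg (pow_lt_one₀ hx0 hx1 hn))

lemma partialSum_mono_left (hbc : ∀ n, b n ≤ c n) (hx : 0 ≤ x) :
    partialSum b N x ≤ partialSum c N x :=
  Finset.sum_le_sum fun n _ =>
    mul_le_mul_of_nonneg_right (by exact_mod_cast hbc n) (pow_nonneg hx n)

lemma continuousOn_totalExcess (hc0 : c 0 = 0) {r : ℝ} (hr : r < 1)
    (hs : Summable fun n => (c n : ℝ) * (r ^ 2) ^ n) :
    ContinuousOn (totalExcess c) (Set.Icc 0 r) := by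
  refine continuousOn_tsum (fun n => ?_) (hs.mul_right (1 - r)⁻¹) fun n x hx => ?_
  · obtain rfl | hn := eq_or_ne n 0
    · simpa only [hc0, Nat.cast_zero, zero_mul] using continuousOn_const
    · have hlog : ContinuousOn (fun x : ℝ => Real.log (1 - x ^ n)) (Set.Icc 0 r) :=
        ContinuousOn.log (by fun_prop) fun x hx =>
          (sub_pos.2 (pow_lt_one₀ hx.1 (hx.2.trans_lt hr) hn)).ne'
      exact continuousOn_const.mul (hlog.neg.sub (by fun_prop))
  · rw [Real.norm_of_nonneg (mul_logExcess_pow_nonneg hc0 hx.1 (hx.2.trans_lt hr) n)]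
    exact mul_logExcess_pow_le hc0 hx.1 hx.2 hr n

lemma exists_lt_mul_pow_of_not_summable (hc0 : c 0 = 0) (hy0 : 0 < y) (hyx : y < x)
    (hns : ¬ Summable fun n => (c n : ℝ) * y ^ n) {C : ℝ} (hC : 0 ≤ C) :
    ∃ m ≥ 1, C < c m * x ^ m := by
  contrapose! hns
  have hx0 : 0 < x := hy0.trans hyx
  refine .of_nonneg_of_le (fun n => by positivity) (fun n => ?_)
    ((summable_geometric_of_lt_one (by positivity) ((div_lt_one hx0).2 hyx)).mul_left C)
  obtain rfl | hn := eq_or_ne n 0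
  · simpa [hc0] using hC
  · rw [div_pow, ← mul_div_assoc, le_div_iff₀ (by positivity)]
    have hxn := hns n (Nat.one_le_iff_ne_zero.2 hn)
    nlinarith [pow_pos hy0 n]

lemma exists_summability_radius {x₀ C : ℝ} (hx₀ : 0 < x₀) (hx₀1 : x₀ ≤ 1)
    (hC : ∀ N, partialSum c N x₀ ≤ C)
    (hbound : ∀ x τ, 0 ≤ x → x < 1 → HasSum (fun n => (c n : ℝ) * x ^ n) τ → τ ≤ C)
    (hone : ∃ N, C < partialSum c N 1) :
    ∃ ρ, 0 < ρ ∧ ρ < 1 ∧ (Summable fun n => (c n : ℝ) * ρ ^ n) ∧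
      ∀ x, ρ < x → x < 1 → ¬ Summable fun n => (c n : ℝ) * x ^ n := by
  let S : Set ℝ := Set.Icc 0 1 ∩ ⋂ N, {x | partialSum c N x ≤ C}
  have hSclosed : IsClosed S := isClosed_Icc.inter <| isClosed_iInter fun N =>
    isClosed_le (by unfold partialSum; fun_prop) continuous_const
  have hSbdd : BddAbove S := ⟨1, fun x hx => hx.1.2⟩
  have hx₀S : x₀ ∈ S := ⟨⟨hx₀.le, hx₀1⟩, Set.mem_iInter.2 hC⟩
  obtain ⟨⟨-, hρ1⟩, hρC⟩ := hSclosed.csSup_mem ⟨x₀, hx₀S⟩ hSbdd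
  rw [Set.mem_iInter] at hρC
  have hρ0 : 0 < sSup S := hx₀.trans_le (le_csSup hSbdd hx₀S)
  refine ⟨sSup S, hρ0, hρ1.lt_of_ne fun hρ => ?_, ?_, fun x hρx hx1 hs => ?_⟩
  · obtain ⟨N, hN⟩ := hone
    exact hN.not_ge (hρ ▸ hρC N)
  · exact summable_of_sum_range_le (fun n => by positivity) hρC
  · have hx0 : 0 ≤ x := (hρ0.trans hρx).le
    have hxS : x ∈ S := ⟨⟨hx0, hx1.le⟩, Set.mem_iInter.2 fun N =>
      (hs.sum_le_tsum _ fun n _ => by positivity).trans (hbound x _ hx0 hx1 hs.hasSum)⟩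
    exact hρx.not_ge (le_csSup hSbdd hxS)

lemma exists_pos_le_mul_pow (hpos : ∀ n ≥ 1, 1 ≤ c n)
    (hmul : ∀ m n, m < n → c m * c n ≤ 2 * c (m + n)) (hx : 0 < x) {m : ℕ} (hm1 : 1 ≤ m)
    (hm : 2 < c m * x ^ m) : ∃ δ > 0, ∀ n ≥ 1, δ ≤ c n * x ^ n := by
  have hterm : ∀ n ≥ 1, 0 < c n * x ^ n := fun n hn => by
    have : (0 : ℝ) < c n := by exact_mod_cast hpos n hn
    positivity
  obtain ⟨n₀, hn₀, hmin⟩ := Finset.exists_min_image (Finset.Icc 1 (2 * m))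
    (fun n => c n * x ^ n) ⟨1, by simp; omega⟩
  refine ⟨c n₀ * x ^ n₀, hterm n₀ (Finset.mem_Icc.1 hn₀).1, fun n hn => ?_⟩
  induction n using Nat.strong_induction_on with
  | _ n ih =>
    obtain hle | hlt := le_or_gt n (2 * m)
    · exact hmin n (Finset.mem_Icc.2 ⟨hn, hle⟩)
    obtain ⟨l, rfl⟩ : ∃ l, n = m + l := ⟨n - m, by omega⟩
    have hcast : (c m * c l : ℝ) ≤ 2 * c (m + l) := by exact_mod_cast hmul m l (by omega)
    have hscale := mul_le_mul_of_nonneg_right hcast (pow_pos hx (m + l)).le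
    have hl := hterm l (by omega)
    have hsplit : (c m * x ^ m) * (c l * x ^ l) = c m * c l * x ^ (m + l) := by ring
    nlinarith [ih l (by omega) (by omega)]

lemma exists_mem_Ioo_exp_lt (k : ℕ) {ρ r τ : ℝ} (hρ : 0 < ρ) (hρr : ρ < r)
    (hcont : ContinuousOn (totalExcess c) (Set.Icc 0 r))
    (hexp : Real.exp (τ + totalExcess c ρ) ≤ 1 - ρ + 2 * τ) (hτ : partialSum c k ρ < τ) :
    ∃ R ∈ Set.Ioo ρ r, Real.exp (τ + totalExcess c R) < 1 - R + R ^ k + 2 * τ ∧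
      partialSum c k R < τ := by
  have hsub : Set.Ioo ρ r ⊆ Set.Icc 0 r := fun x hx => ⟨(hρ.trans hx.1).le, hx.2.le⟩
  have hleft : ContinuousWithinAt (fun R => Real.exp (τ + totalExcess c R)) (Set.Ioo ρ r) ρ :=
    ((hcont ρ ⟨hρ.le, hρr.le⟩).mono hsub).const_add τ |>.rexp
  have hright : Continuous fun R : ℝ => 1 - R + R ^ k + 2 * τ := by fun_prop
  have hpoly : Continuous (partialSum c k) := by
    unfold partialSum
    fun_prop
  have hlt : Real.exp (τ + totalExcess c ρ) < 1 - ρ + ρ ^ k + 2 * τ := by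
    linarith [pow_pos hρ k]
  have : (nhdsWithin ρ (Set.Ioo ρ r)).NeBot := left_nhdsWithin_Ioo_neBot hρr
  have hev := (hleft.tendsto.eventually_lt (hright.continuousWithinAt.tendsto) hlt).and
    (hpoly.continuousWithinAt.tendsto.eventually_lt_const hτ)
  obtain ⟨R, ⟨hR₁, hR₂⟩, hR⟩ := (hev.and self_mem_nhdsWithin).exists
  exact ⟨R, hR, hR₁, hR₂⟩

namespace IsEulerTransform

variable {t u : ℕ → ℕ}

lemma exp_add_totalExcess_le (h : IsEulerTransform t u) (ht1 : t 1 = 1)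
    (hu : ∀ n ≥ 2, u n = 2 * t n) (hx0 : 0 ≤ x) (hx1 : x < 1) {τ : ℝ}
    (hτ : HasSum (fun n => (t n : ℝ) * x ^ n) τ) :
    Real.exp (τ + totalExcess t x) ≤ 1 - x + 2 * τ := by
  have hC : HasSum (fun n => (u n : ℝ) * x ^ n) (1 - x + 2 * τ) := by
    have hlow := (hasSum_nat_add_iff' 2).2 (hτ.mul_left 2)
    rw [← hasSum_nat_add_iff' 2]
    convert hlow using 1
    · ext n
      rw [hu (n + 2) (by omega)]
      push_cast
      ring
    · simp only [Finset.sum_range_succ, Finset.sum_range_zero, h.apply_zero_left,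
        h.apply_zero_right, h.apply_one_right, ht1]
      norm_num
      ring
  have hs : Summable fun n => (t n : ℝ) * (x ^ 2) ^ n := by
    refine .of_nonneg_of_le (fun n => by positivity) (fun n => ?_) hτ.summable
    have := pow_le_of_le_one hx0 hx1.le two_ne_zero
    gcongr
  have hexcess := (summable_mul_logExcess_pow h.apply_zero_left hx0 le_rfl hx1 hs).hasSum
  have hlim := (hτ.tendsto_sum_nat.add hexcess.tendsto_sum_nat).rexp
  exact le_of_tendsto' hlim fun N => h.exp_le_of_hasSum hx0 hx1 hC

lemma sum_le_two (h : IsEulerTransform t u) (ht1 : t 1 = 1) (hu : ∀ n ≥ 2, u n = 2 * t n)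
    (hx0 : 0 ≤ x) (hx1 : x < 1) {τ : ℝ} (hτ : HasSum (fun n => (t n : ℝ) * x ^ n) τ) : τ ≤ 2 := by
  have hτ0 : 0 ≤ τ := hτ.nonneg fun n => by positivity
  have hexp := h.exp_add_totalExcess_le ht1 hu hx0 hx1 hτ
  have hquad := Real.quadratic_le_exp_of_nonneg hτ0
  have hmono : Real.exp τ ≤ Real.exp (τ + totalExcess t x) :=
    Real.exp_le_exp.2 (le_add_of_nonneg_right (totalExcess_nonneg h.apply_zero_left hx0 hx1))
  by_contra! hτ2
  nlinarith

lemma one_le_left (h : IsEulerTransform t u) (ht1 : t 1 = 1) (hu : ∀ n ≥ 2, u n = 2 * t n) :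
    ∀ n ≥ 1, 1 ≤ t n := by
  intro n hn
  have hun := h.one_le ht1.ge n
  obtain rfl | hn2 := hn.eq_or_lt'
  · exact ht1.ge
  · have := hu n hn2
    omega

lemma mul_le_two_mul (h : IsEulerTransform t u) (hu : ∀ n ≥ 2, u n = 2 * t n) {m n : ℕ}
    (hmn : m < n) : t m * t n ≤ 2 * t (m + n) := by
  obtain rfl | hm := Nat.eq_zero_or_pos m
  · simp [h.apply_zero_left]
  · exact hu (m + n) (by omega) ▸ h.mul_le hmn

lemma exists_radius (h : IsEulerTransform t u) (ht1 : t 1 = 1) (hu : ∀ n ≥ 2, u n = 2 * t n) :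
    ∃ ρ, 0 < ρ ∧ ρ < 1 ∧ (Summable fun n => (t n : ℝ) * ρ ^ n) ∧
      ∀ x, ρ < x → x < 1 → ¬ Summable fun n => (t n : ℝ) * x ^ n := by
  refine exists_summability_radius (x₀ := 1 / 16) (C := 2) (by norm_num) (by norm_num) (fun N => ?_)
    (fun x τ hx0 hx1 hτ => h.sum_le_two ht1 hu hx0 hx1 hτ) ⟨4, ?_⟩
  · linarith [h.partialSum_one_div_sixteen_le ht1.le (fun n hn => (hu n hn).ge) N]
  · have h2 : (1 : ℝ) ≤ t 2 := by exact_mod_cast h.one_le_left ht1 hu 2 (by norm_num)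
    have h3 : (1 : ℝ) ≤ t 3 := by exact_mod_cast h.one_le_left ht1 hu 3 (by norm_num)
    simp only [partialSum, Finset.sum_range_succ, Finset.sum_range_zero, h.apply_zero_left, ht1]
    norm_num
    linarith

lemma partialSum_le_of_slack (h : IsEulerTransform b e) (hb1 : b 1 ≤ 1)
    (he : ∀ n ≥ 2, 2 * b n ≤ e n) {k : ℕ} (hk : 2 ≤ k) (hlt : 2 * b k < e k) (hx0 : 0 ≤ x)
    (hx1 : x < 1) {τ δ : ℝ} (hδ : 0 ≤ δ) (hexcess : ∀ N, excess b N x ≤ δ)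
    (hexp : Real.exp (τ + δ) ≤ 1 - x + x ^ k + 2 * τ) (hbase : partialSum b k x ≤ τ) (N : ℕ) :
    partialSum b N x ≤ τ := by
  refine h.partialSum_le_of_exp_le hx0 hx1 (fun N hN => ?_) hδ (fun N _ => hexcess N) hexp hbase N
  have hslack : partialSum (Pi.single k 1) (N + 1) x = x ^ k := by
    rw [partialSum, Finset.sum_eq_single_of_mem k (Finset.mem_range.2 (by omega))]
    · simp
    · intro n _ hn
      simp [hn]
  rw [← hslack]
  refine h.one_sub_add_le_partialSum hb1 (Pi.single_eq_of_ne (by omega) 1)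
    (Pi.single_eq_of_ne (by omega) 1) (fun n hn => ?_) hx0 N
  obtain rfl | hnk := eq_or_ne n k
  · simpa using hlt
  · simpa [hnk] using he n hn

lemma exists_mul_pow_le (ht : IsEulerTransform t u) (hb : IsEulerTransform b e)
    (ht1 : t 1 = 1) (hu : ∀ n ≥ 2, u n = 2 * t n) (hbt : ∀ n, b n ≤ t n)
    (he : ∀ n ≥ 2, 2 * b n ≤ e n) {k : ℕ} (hk : 2 ≤ k) (hlt : 2 * b k < e k) {ρ : ℝ} (hρ0 : 0 < ρ)
    (hρ1 : ρ < 1) (hs : Summable fun n => (t n : ℝ) * ρ ^ n) :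
    ∃ R τ, ρ < R ∧ R < 1 ∧ ∀ n, b n * R ^ n ≤ τ := by
  have ht0 := ht.apply_zero_left
  let τ := ∑' n, (t n : ℝ) * ρ ^ n
  let r := √ρ
  have hr2 : r ^ 2 = ρ := Real.sq_sqrt hρ0.le
  have hr1 : r < 1 := Real.sqrt_lt' one_pos |>.2 (by simpa using hρ1)
  have hρr : ρ < r := Real.lt_sqrt_of_sq_lt (by nlinarith)
  have hs' : Summable fun n => (t n : ℝ) * (r ^ 2) ^ n := by rwa [hr2]
  have hτ : partialSum t k ρ < τ := by
    have htk : (1 : ℝ) ≤ t k := by exact_mod_cast ht.one_le_left ht1 hu k (by omega)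
    have hle : partialSum t (k + 1) ρ ≤ τ := hs.sum_le_tsum _ fun n _ => by positivity
    rw [partialSum_succ] at hle
    have : 0 < t k * ρ ^ k := by positivity
    linarith
  obtain ⟨R, ⟨hρR, hRr⟩, hexp, hbase⟩ := exists_mem_Ioo_exp_lt k hρ0 hρr
    (continuousOn_totalExcess ht0 hr1 hs')
    (ht.exp_add_totalExcess_le ht1 hu hρ0.le hρ1 hs.hasSum) hτ
  have hR0 : 0 ≤ R := (hρ0.trans hρR).le
  have hR1 : R < 1 := hRr.trans hr1
  have hexcess (N : ℕ) : excess b N R ≤ totalExcess t R :=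
    (excess_mono_left ht0 hbt hR0 hR1).trans (excess_le_totalExcess ht0 hR0 hRr.le hr1 hs')
  have hsum (N : ℕ) : partialSum b N R ≤ τ :=
    hb.partialSum_le_of_slack ((hbt 1).trans ht1.le) he hk hlt hR0 hR1
      (totalExcess_nonneg ht0 hR0 hR1) hexcess hexp.le
      ((partialSum_mono_left hbt hR0).trans hbase.le) N
  refine ⟨R, τ, hρR, hR1, fun n => ?_⟩
  linarith [hsum (n + 1), partialSum_succ (c := b) (x := R) (N := n),
    partialSum_nonneg (c := b) (N := n) hR0]

theorem tendsto_div_zero (ht : IsEulerTransform t u) (hb : IsEulerTransform b e) (ht1 : t 1 = 1)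
    (hu : ∀ n ≥ 2, u n = 2 * t n) (hbt : ∀ n, b n ≤ t n) (he : ∀ n ≥ 2, 2 * b n ≤ e n) {k : ℕ}
    (hk : 2 ≤ k) (hlt : 2 * b k < e k) :
    Filter.Tendsto (fun n => (b n / t n : ℝ)) Filter.atTop (nhds 0) := by
  obtain ⟨ρ, hρ0, hρ1, hs, hns⟩ := ht.exists_radius ht1 hu
  obtain ⟨R, τ, hρR, hR1, hτ⟩ := ht.exists_mul_pow_le hb ht1 hu hbt he hk hlt hρ0 hρ1 hs
  obtain ⟨Q, hρQ, hQR⟩ := exists_between hρR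
  obtain ⟨y, hρy, hyQ⟩ := exists_between hρQ
  have hQ0 : 0 < Q := hρ0.trans hρQ
  have hR0 : 0 < R := hρ0.trans hρR
  obtain ⟨m, hm1, hm⟩ := exists_lt_mul_pow_of_not_summable ht.apply_zero_left (hρ0.trans hρy) hyQ
    (hns y hρy (by linarith)) zero_le_two
  obtain ⟨δ, hδ0, hδ⟩ := exists_pos_le_mul_pow (ht.one_le_left ht1 hu)
    (fun m n hmn => ht.mul_le_two_mul hu hmn) hQ0 hm1 hm
  have hgeom : Filter.Tendsto (fun n => τ / δ * (Q / R) ^ n) Filter.atTop (nhds 0) := by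
    simpa using (tendsto_pow_atTop_nhds_zero_of_lt_one (div_pos hQ0 hR0).le
      ((div_lt_one hR0).2 hQR)).const_mul (τ / δ)
  refine squeeze_zero' (.of_forall fun n => by positivity) ?_ hgeom
  filter_upwards [Filter.eventually_ge_atTop 1] with n hn
  have htn : (0 : ℝ) < t n := by exact_mod_cast ht.one_le_left ht1 hu n hn
  calc (b n / t n : ℝ) = (b n * R ^ n) / (t n * Q ^ n) * (Q / R) ^ n := by
        rw [div_pow]
        field_simp
    _ ≤ τ / δ * (Q / R) ^ n := by
      have hτ0 : 0 ≤ τ := le_trans (by positivity) (hτ 0)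
      gcongr
      exacts [hτ n, hδ n hn]

end IsEulerTransform

end GeneratingFunctions

/-! ### Counting cographs -/

namespace IsoClass

/-- The number of isomorphism classes of graphs on `n` vertices satisfying `P`. -/
noncomputable def count (P : IsoClass → Prop) (n : ℕ) : ℕ := {c | P c ∧ c.order = n}.ncard

lemma finite_setOf_and_order_eq (P : IsoClass → Prop) (n : ℕ) :
    {c | P c ∧ c.order = n}.Finite :=
  (finite_setOf_order_eq n).subset fun _ hc => hc.2

lemma count_mono {P Q : IsoClass → Prop} (h : ∀ c, P c → Q c) (n : ℕ) : count P n ≤ count Q n :=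
  Set.ncard_le_ncard (fun _ hc => ⟨h _ hc.1, hc.2⟩) (finite_setOf_and_order_eq Q n)

lemma count_lt_count {P Q : IsoClass → Prop} (h : ∀ c, P c → Q c) {c : IsoClass} (hQ : Q c)
    (hP : ¬ P c) : count P c.order < count Q c.order :=
  Set.ncard_lt_ncard ⟨fun _ hd => ⟨h _ hd.1, hd.2⟩, fun hsub => hP (hsub ⟨hQ, rfl⟩).1⟩
    (finite_setOf_and_order_eq Q _)

lemma classCount_eq_count (P : IsoClass → Prop) (n : ℕ) :
    classCount n (fun G => P (mk G)) = count P n := by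
  rw [classCount_eq_ncard, count]
  congr 1
  ext c
  constructor
  · rintro ⟨G, hG, rfl⟩
    exact ⟨hG, by rw [order_mk, Nat.card_fin]⟩
  · rintro ⟨hc, hn⟩
    obtain ⟨G, rfl⟩ := exists_mk_eq hn
    exact ⟨G, hc, rfl⟩

lemma isEulerTransform_count (P : IsoClass → Prop) :
    IsEulerTransform (count fun c => c.rep.Connected ∧ P c)
      (count fun c => ∀ d ∈ c.components, P d) := by
  let α := {c : IsoClass // c.rep.Connected ∧ P c}
  refine ⟨α, fun a => order a, fun a => Fin.pos_iff_nonempty.2 a.2.1.nonempty, fun n => ?_,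
    fun n => ?_⟩
  · rw [count, (finite_setOf_and_order_eq _ n).cast_ncard_eq,
      ← Subtype.val_injective.encard_image]
    congr 1
    ext c
    constructor
    · rintro ⟨a, ha, rfl⟩
      exact ⟨a.2, ha⟩
    · exact fun ⟨hc, hn⟩ => ⟨⟨c, hc⟩, hn, rfl⟩
  · rw [count, (finite_setOf_and_order_eq _ n).cast_ncard_eq,
      ← (Multiset.map_injective Subtype.val_injective).encard_image,
      ← components_injective.encard_image]
    congr 1
    ext M
    constructor
    · rintro ⟨M, hM, rfl⟩
      have hmem (d) (hd : d ∈ M.map Subtype.val) : d.rep.Connected ∧ P d := by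
        obtain ⟨a, -, rfl⟩ := Multiset.mem_map.1 hd
        exact a.2
      obtain ⟨c, hc⟩ := exists_components_eq fun d hd => (hmem d hd).1
      refine ⟨c, ⟨fun d hd => (hmem d (hc ▸ hd)).2, ?_⟩, hc⟩
      rw [← sum_map_order_components, hc, Multiset.map_map]
      exact hM
    · rintro ⟨c, ⟨hc, hn⟩, rfl⟩
      lift c.components to Multiset α using
        fun d hd => ⟨connected_rep_of_mem_components hd, hc d hd⟩ with M hM
      refine ⟨M, ?_, rfl⟩
      rw [← hn, ← sum_map_order_components, ← hM, Multiset.map_map]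
      rfl

theorem count_eq_two_mul {P : IsoClass → Prop} (hP : ∀ c, P c → IsCograph c.rep)
    (hcompl : ∀ c, P c → P c.compl) {n : ℕ} (hn : 2 ≤ n) :
    count P n = 2 * count (fun c => c.rep.Connected ∧ P c) n := by
  let S := {c : IsoClass | (c.rep.Connected ∧ P c) ∧ c.order = n}
  have hS : S.Finite := finite_setOf_and_order_eq _ n
  have hunion : {c | P c ∧ c.order = n} = S ∪ compl '' S := by
    ext c
    constructor
    · rintro ⟨hc, hcn⟩
      have : NeZero c.order := ⟨by omega⟩
      refine c.rep.connected_or_connected_compl.imp (fun h => ⟨⟨h, hc⟩, hcn⟩) fun h => ?_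
      exact ⟨c.compl, ⟨⟨connected_rep_mk.2 h, hcompl c hc⟩, by rwa [order_compl]⟩, compl_compl c⟩
    · rintro (⟨⟨-, hc⟩, hcn⟩ | ⟨c, ⟨⟨-, hc⟩, hcn⟩, rfl⟩)
      exacts [⟨hc, hcn⟩, ⟨hcompl c hc, by rwa [order_compl]⟩]
  have hdisj : Disjoint S (compl '' S) := by
    rw [Set.disjoint_right]
    rintro _ ⟨c, ⟨⟨hconn, hc⟩, rfl⟩, rfl⟩ ⟨⟨hconn', -⟩, -⟩
    have := (hP c hc).subsingleton_of_connected_compl hconn.preconnected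
      (connected_rep_mk.1 hconn').preconnected
    have := Fin.subsingleton_iff_le_one.1 this
    omega
  have hinj : Function.Injective compl := Function.LeftInverse.injective compl_compl
  rw [count, hunion, Set.ncard_union_eq hdisj hS (hS.image _), Set.ncard_image_of_injective _ hinj,
    ← two_mul, count]

end IsoClass

section ConnectedComponent

variable {K V : Type} {A : SimpleGraph K} {G : SimpleGraph V}

lemma exists_isIndContained_induce_supp (hA : A.Connected) (h : A.IsIndContained G) :
    ∃ C : G.ConnectedComponent, A.IsIndContained (G.induce C.supp) := by
  obtain ⟨f⟩ := h
  obtain ⟨k⟩ := hA.nonempty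
  have hf (i : K) : f i ∈ (G.connectedComponentMk (f k)).supp :=
    ConnectedComponent.sound ((hA.preconnected i k).map f.toHom)
  exact ⟨_, ⟨f.toEmbedding.codRestrict _ hf, f.map_adj_iff⟩⟩

lemma HasModule.of_induce_supp {C : G.ConnectedComponent} (h : HasModule A (G.induce C.supp)) :
    HasModule A G := by
  obtain ⟨f, hf⟩ := h
  refine ⟨(Embedding.induce _).comp f, fun v hv i j => ?_⟩
  by_cases hvC : v ∈ C.supp
  · refine hf ⟨v, hvC⟩ ?_ i j
    rintro ⟨k, hk⟩
    exact hv ⟨k, congrArg Subtype.val hk⟩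
  · have hnadj (k : K) : ¬ G.Adj (f k) v := fun h => hvC ((C.mem_supp_congr_adj h).1 (f k).2)
    exact iff_of_false (hnadj i) (hnadj j)

lemma not_hasModule_induce_supp [Finite V] {A : SimpleGraph V} (hG : ¬ G.Connected)
    (C : G.ConnectedComponent) : ¬ HasModule A (G.induce C.supp) := by
  rintro ⟨f, -⟩
  have hinj : Function.Injective fun v => (f v : V) := Subtype.val_injective.comp f.injective
  have huniv (v : V) : v ∈ C.supp := by
    obtain ⟨u, rfl⟩ := Finite.surjective_of_injective hinj v
    exact (f u).2
  have : Nonempty V := C.nonempty_supp.to_type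
  exact hG ⟨fun u v => ConnectedComponent.exact ((huniv u).trans (huniv v).symm)⟩

end ConnectedComponent

lemma isCograph_rep_iff_forall_mem_components {c : IsoClass} :
    IsCograph c.rep ↔ ∀ d ∈ c.components, IsCograph d.rep := by
  refine ⟨fun hc d hd => ?_, fun hc => isCograph_iff.2 fun hpath => ?_⟩
  · obtain ⟨C, rfl⟩ := mem_componentClasses.1 hd
    exact IsoClass.isCograph_rep_mk.2 (hc.of_isIndContained ⟨Embedding.induce _⟩)
  · obtain ⟨C, hC⟩ := exists_isIndContained_induce_supp (pathGraph_connected 3) hpath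
    have hcog := hc _ (mem_componentClasses.2 ⟨C, rfl⟩)
    exact isCograph_iff.1 (IsoClass.isCograph_rep_mk.1 hcog) hC

/-- Cographs in which neither `switchGraph` nor its complement is a module, so that
`exists_genCospectral_not_iso_of_hasModule` does not apply. -/
def IsSwitchFreeCograph {V : Type} (G : SimpleGraph V) : Prop :=
  IsCograph G ∧ ¬ HasModule switchGraph G ∧ ¬ HasModule switchGraphᶜ G

lemma isSwitchFreeCograph_rep_mk {V : Type} [Finite V] {G : SimpleGraph V} :
    IsSwitchFreeCograph (IsoClass.mk G).rep ↔ IsSwitchFreeCograph G := by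
  simp only [IsSwitchFreeCograph, IsoClass.isCograph_rep_mk, IsoClass.hasModule_rep_mk]

lemma IsSwitchFreeCograph.compl {V : Type} {G : SimpleGraph V} (h : IsSwitchFreeCograph G) :
    IsSwitchFreeCograph Gᶜ :=
  ⟨h.1.compl, fun hm => h.2.2 (compl_compl G ▸ hm.compl),
    fun hm => h.2.1 (compl_compl G ▸ compl_compl switchGraph ▸ hm.compl)⟩

lemma IsSwitchFreeCograph.of_mem_components {c d : IsoClass} (h : IsSwitchFreeCograph c.rep)
    (hd : d ∈ c.components) : IsSwitchFreeCograph d.rep := by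
  have hcog := isCograph_rep_iff_forall_mem_components.1 h.1 d hd
  obtain ⟨C, rfl⟩ := mem_componentClasses.1 hd
  exact ⟨hcog, fun hm => h.2.1 (IsoClass.hasModule_rep_mk.1 hm).of_induce_supp,
    fun hm => h.2.2 (IsoClass.hasModule_rep_mk.1 hm).of_induce_supp⟩

lemma isSwitchFreeCograph_of_mem_components_switchGraph {d : IsoClass}
    (hd : d ∈ (IsoClass.mk switchGraph).components) : IsSwitchFreeCograph d.rep := by
  have hcog := isCograph_rep_iff_forall_mem_components.1
    (IsoClass.isCograph_rep_mk.2 isCograph_switchGraph) d hd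
  rw [IsoClass.components_mk] at hd
  obtain ⟨C, rfl⟩ := mem_componentClasses.1 hd
  have hmod (A : SimpleGraph (Fin 9)) :
      ¬ HasModule A (IsoClass.mk (switchGraph.induce C.supp)).rep :=
    fun h => not_hasModule_induce_supp not_connected_switchGraph C (IsoClass.hasModule_rep_mk.1 h)
  exact ⟨hcog, hmod _, hmod _⟩

lemma classCount_isSwitchFreeCograph_eq_count (n : ℕ) :
    classCount n IsSwitchFreeCograph = IsoClass.count (fun c => IsSwitchFreeCograph c.rep) n := by
  simp only [← IsoClass.classCount_eq_count, isSwitchFreeCograph_rep_mk]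

lemma classCount_isCograph_eq_count (n : ℕ) :
    classCount n IsCograph = IsoClass.count (fun c => IsCograph c.rep) n := by
  simp only [← IsoClass.classCount_eq_count, IsoClass.isCograph_rep_mk]

lemma isCograph_bot {V : Type} : IsCograph (⊥ : SimpleGraph V) :=
  fun ⟨_, hf⟩ => (hf 0 1).2 (by simp [pathGraph_adj])

lemma count_connected_isCograph_one :
    IsoClass.count (fun c => c.rep.Connected ∧ IsCograph c.rep) 1 = 1 := by
  rw [IsoClass.count, Set.ncard_eq_one]
  refine ⟨.mk (⊥ : SimpleGraph (Fin 1)), Set.eq_singleton_iff_unique_mem.2 ⟨?_, ?_⟩⟩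
  · exact ⟨⟨IsoClass.connected_rep_mk.2 ⟨.of_subsingleton⟩,
      IsoClass.isCograph_rep_mk.2 isCograph_bot⟩, by rw [IsoClass.order_mk, Nat.card_fin]⟩
  · rintro c ⟨-, hc⟩
    obtain ⟨G, rfl⟩ := IsoClass.exists_mk_eq hc
    rw [Subsingleton.elim G ⊥]

theorem tendsto_classCount_isSwitchFreeCograph_div :
    Filter.Tendsto (fun n => (classCount n IsSwitchFreeCograph / classCount n IsCograph : ℝ))
      Filter.atTop (nhds 0) := by
  have hcog {n : ℕ} (hn : 2 ≤ n) := IsoClass.count_eq_two_mul (P := fun c => IsCograph c.rep)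
    (fun _ h => h) (fun _ h => IsoClass.isCograph_rep_mk.2 h.compl) hn
  have hfree {n : ℕ} (hn : 2 ≤ n) := IsoClass.count_eq_two_mul
    (P := fun c => IsSwitchFreeCograph c.rep) (fun _ h => h.1)
    (fun _ h => isSwitchFreeCograph_rep_mk.2 h.compl) hn
  have ht := IsoClass.isEulerTransform_count fun c => IsCograph c.rep
  simp only [← isCograph_rep_iff_forall_mem_components] at ht
  have hcomp (c : IsoClass) (h : IsSwitchFreeCograph c.rep) :
      ∀ d ∈ c.components, IsSwitchFreeCograph d.rep := fun _ => h.of_mem_components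
  have hstrict := IsoClass.count_lt_count hcomp (c := .mk switchGraph)
    (fun _ => isSwitchFreeCograph_of_mem_components_switchGraph)
    fun h => (isSwitchFreeCograph_rep_mk.1 h).2.1 (.self _)
  rw [IsoClass.order_mk, Nat.card_fin, hfree (by norm_num)] at hstrict
  refine (ht.tendsto_div_zero (IsoClass.isEulerTransform_count fun c => IsSwitchFreeCograph c.rep)
    count_connected_isCograph_one (fun _ => hcog)
    (IsoClass.count_mono fun _ h => ⟨h.1, h.2.1⟩)
    (fun n hn => (hfree hn).symm.trans_le (IsoClass.count_mono hcomp n))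
    (by norm_num) hstrict).congr' ?_
  filter_upwards [Filter.eventually_ge_atTop 2] with n hn
  rw [classCount_isSwitchFreeCograph_eq_count, classCount_isCograph_eq_count, hcog hn, hfree hn,
    Nat.cast_mul, Nat.cast_mul, mul_div_mul_left _ _ (by norm_num)]

lemma classCount_pos {n : ℕ} {P : SimpleGraph (Fin n) → Prop} {G : SimpleGraph (Fin n)}
    (hG : P G) : 0 < classCount n P := by
  rw [classCount_eq_ncard, Set.ncard_pos (Set.toFinite _)]
  exact ⟨_, G, hG, rfl⟩

lemma classCount_mono {n : ℕ} {P Q : SimpleGraph (Fin n) → Prop} (h : ∀ G, P G → Q G) :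
    classCount n P ≤ classCount n Q := by
  rw [classCount_eq_ncard, classCount_eq_ncard]
  exact Set.ncard_le_ncard (Set.image_mono h) (Set.toFinite _)

lemma classCount_or_le {n : ℕ} (P Q : SimpleGraph (Fin n) → Prop) :
    classCount n (fun G => P G ∨ Q G) ≤ classCount n P + classCount n Q := by
  simp only [classCount_eq_ncard, Set.ofPred_or, Set.image_union]
  exact Set.ncard_union_le _ _

/-- **Almost all cographs have a generalized cospectral mate.** -/
theorem almost_all_cographs_have_generalized_cospectral_mate :
    Filter.Tendsto
      (fun n : ℕ =>
        (classCount n (fun G => IsCograph G ∧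
            ∃ H : SimpleGraph (Fin n), GenCospectral G H ∧ ¬ Nonempty (G ≃g H)) : ℝ) /
        (classCount n (fun G => IsCograph G) : ℝ))
      Filter.atTop (nhds 1) := by
  have hmate (n : ℕ) (G : SimpleGraph (Fin n)) (hG : IsCograph G) :
      (IsCograph G ∧ ∃ H : SimpleGraph (Fin n), GenCospectral G H ∧ ¬ Nonempty (G ≃g H)) ∨
        IsSwitchFreeCograph G := by
    by_cases h : HasModule switchGraph G ∨ HasModule switchGraphᶜ G
    · exact .inl ⟨hG, exists_genCospectral_not_iso_of_hasModule hG h⟩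
    · exact .inr ⟨hG, not_or.1 h⟩
  have hpos (n : ℕ) : (0 : ℝ) < classCount n (fun G => IsCograph G) :=
    Nat.cast_pos.2 (classCount_pos isCograph_bot)
  have hlim := tendsto_classCount_isSwitchFreeCograph_div.const_sub 1
  rw [sub_zero] at hlim
  refine tendsto_of_tendsto_of_tendsto_of_le_of_le hlim tendsto_const_nhds (fun n => ?_) fun n => ?_
  · have hle := (classCount_mono (hmate n)).trans (classCount_or_le _ _)
    rw [sub_le_iff_le_add, ← add_div, one_le_div (hpos n)]
    exact (Nat.cast_le.2 hle).trans_eq (Nat.cast_add _ _)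
  · rw [div_le_one (hpos n)]
    exact Nat.cast_le.2 (classCount_mono fun _ hG => hG.1)
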